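/- Let d, N ∈ ℕ, 1 < p < 2, α ∈ (0,1), c₁, c₂ > 0, Q₀ ⊂ ℝ^d a cube, and let u ∈ W^{1,p}(Q₀;ℝ^N) be such that: (i) V(∇u) ∈ W^{1,2}_loc(Q₀) and ∫_Q|∇(V(∇u))|² ≤ (c₁/R²)∫_{4Q}|V(∇u)|² for every cube Q of sidelength R with 4Q ⊂ Q₀; (ii) u has a continuous representative with [u]_{C^α(Q)} ≤ c₂R^{1−α}((⨍_{2Q}|∇u|^p)^{1/p} + 1) for every cube Q of sidelength R with 3Q ⊂ Q₀. Then for every q ∈ (p, p + 2/(1−α)) one has ∇u ∈ L^q_loc(Q₀), and there is C > 0, depending only on d, N, p, q, α, c₁, c₂, such that (⨍_Q|∇u|^q)^{1/q} ≤ C((⨍_{2Q}|∇u|^p)^{1/p} + 1) for every cube Q with 2Q ⊂ Q₀. -/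

import Mathlib

open MeasureTheory Filter Metric Set
open scoped ENNReal Topology RealInnerProductSpace

noncomputable section

/-- `ℝ^d` with the Euclidean norm. -/
abbrev Ed (d : ℕ) : Type := EuclideanSpace ℝ (Fin d)
/-- `ℝ^N` with the Euclidean norm. -/
abbrev En (N : ℕ) : Type := EuclideanSpace ℝ (Fin N)
/-- The space of `N × d` matrices with the Euclidean (Frobenius) norm. -/
abbrev Mat (N d : ℕ) : Type := EuclideanSpace ℝ (Fin N × Fin d)

/-- The open axis-parallel cube with center `c` and sidelength `R`. -/
def cube {d : ℕ} (c : Ed d) (R : ℝ) : Set (Ed d) := {x | ∀ i, |x i - c i| < R / 2}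

/-- The `i`-th partial derivative of a scalar function. -/
def pder {d : ℕ} (φ : Ed d → ℝ) (i : Fin d) (x : Ed d) : ℝ :=
  fderiv ℝ φ x (EuclideanSpace.single i 1)

/-- `g` is the weak gradient of `f` on `U`: for every smooth compactly supported scalar test
function `φ` with support in `U` and all indices `a`, `i`,
`∫_U f^a ∂_i φ = −∫_U g^a_i φ`. -/
def IsWeakGrad {d : ℕ} {ι : Type} [Fintype ι] (U : Set (Ed d))
    (f : Ed d → EuclideanSpace ℝ ι) (g : Ed d → EuclideanSpace ℝ (ι × Fin d)) : Prop :=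
  ∀ φ : Ed d → ℝ, ContDiff ℝ (⊤ : ℕ∞) φ → HasCompactSupport φ → tsupport φ ⊆ U →
    ∀ (a : ι) (i : Fin d),
      ∫ x in U, f x a * pder φ i x = - ∫ x in U, g x (a, i) * φ x

/-- The classical gradient matrix of a (smooth) vector-valued function. -/
def clGrad {d N : ℕ} (φ : Ed d → En N) (x : Ed d) : Mat N d :=
  (WithLp.equiv 2 _).symm fun q => fderiv ℝ φ x (EuclideanSpace.single q.2 1) q.1

/-- `V(η) = |η|^{(p-2)/2} η` (so that `V(0) = 0`). -/
def Vm (p : ℝ) {ι : Type} [Fintype ι] (η : EuclideanSpace ℝ ι) : EuclideanSpace ℝ ι :=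
  ‖η‖ ^ ((p - 2) / 2) • η

/-- `u` (with weak gradient `g`) is a weak solution of `div 𝒜(∇u) = 0` on `U`:
`∫_U 𝒜(∇u)·∇φ = 0` for all smooth compactly supported `φ` with support in `U`. -/
def IsWeakSol {d N : ℕ} (U : Set (Ed d)) (𝒜 : Mat N d → Mat N d)
    (g : Ed d → Mat N d) : Prop :=
  ∀ φ : Ed d → En N, ContDiff ℝ (⊤ : ℕ∞) φ → HasCompactSupport φ → tsupport φ ⊆ U →
    ∫ x in U, ⟪𝒜 (g x), clGrad φ x⟫ = 0



lemma isOpen_cube {d : ℕ} (c : Ed d) (R : ℝ) : IsOpen (cube c R) := by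
  have : cube c R = ⋂ i, {x : Ed d | |x i - c i| < R / 2} := by
    ext x; simp [cube]
  rw [this]
  refine isOpen_iInter_of_finite fun i => ?_
  exact isOpen_lt (by fun_prop) continuous_const

lemma measurableSet_cube {d : ℕ} (c : Ed d) (R : ℝ) : MeasurableSet (cube c R) :=
  (isOpen_cube c R).measurableSet

lemma volume_cube {d : ℕ} (c : Ed d) {R : ℝ} (hR : 0 ≤ R) :
    volume (cube c R) = ENNReal.ofReal (R ^ d) := by
  have h := (PiLp.volume_preserving_ofLp (ι := Fin d)).measure_preimage
    (s := Set.pi univ fun i => Ioo (c i - R / 2) (c i + R / 2))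
    (MeasurableSet.univ_pi fun i => measurableSet_Ioo).nullMeasurableSet
  have he : cube c R = WithLp.ofLp ⁻¹' (Set.pi univ fun i => Ioo (c i - R / 2) (c i + R / 2)) := by
    ext x
    simp only [cube, mem_ofPred_eq, mem_preimage, Set.mem_pi, mem_univ, forall_const, mem_Ioo, abs_lt]
    refine forall_congr' fun i => ?_
    constructor
    · rintro ⟨h1, h2⟩; constructor <;> linarith
    · rintro ⟨h1, h2⟩; constructor <;> linarith
  rw [he, h, Real.volume_pi_Ioo, ENNReal.ofReal_pow hR]
  simp

lemma mem_cube_comm {d : ℕ} {x z : Ed d} {r : ℝ} : x ∈ cube z r ↔ z ∈ cube x r := by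
  simp only [cube, mem_ofPred_eq]
  refine forall_congr' fun i => ?_
  rw [abs_sub_comm]

lemma self_mem_cube {d : ℕ} {z : Ed d} {r : ℝ} (hr : 0 < r) : z ∈ cube z r := by
  intro i; simp [hr]

lemma cube_subset_add {d : ℕ} {c z : Ed d} {A B R : ℝ} (hz : z ∈ cube c A) (h : A + B ≤ R) :
    cube z B ⊆ cube c R := by
  intro x hx i
  have h1 := hz i
  have h2 := hx i
  have : |x i - c i| ≤ |x i - z i| + |z i - c i| := abs_sub_le _ _ _
  linarith

lemma cube_mono {d : ℕ} {c : Ed d} {A R : ℝ} (h : A ≤ R) : cube c A ⊆ cube c R := by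
  intro x hx i
  have h2 := hx i
  linarith

lemma convex_cube {d : ℕ} {c : Ed d} {r : ℝ} {x h : Ed d} (hx : x ∈ cube c r)
    (hxh : x + h ∈ cube c r) {t : ℝ} (h0 : 0 ≤ t) (h1 : t ≤ 1) : x + t • h ∈ cube c r := by
  intro i
  have a := hx i
  have b := hxh i
  simp only [PiLp.add_apply, PiLp.smul_apply, smul_eq_mul] at b ⊢
  rw [abs_lt] at a b ⊢
  rcases h0.eq_or_lt with h0 | h0
  · subst h0; simpa using a
  have e1 := mul_pos h0 (sub_pos.2 b.1)
  have e2 := mul_pos h0 (sub_pos.2 b.2)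
  have e3 := mul_nonneg (sub_nonneg.2 h1) (sub_pos.2 a.1).le
  have e4 := mul_nonneg (sub_nonneg.2 h1) (sub_pos.2 a.2).le
  constructor <;> nlinarith

lemma norm_sq_le_of_cube {d : ℕ} {h : Ed d} {r : ℝ} (hh : h ∈ cube 0 (2 * r)) :
    ‖h‖ ^ 2 ≤ d * r ^ 2 := by
  rw [EuclideanSpace.norm_sq_eq]
  calc ∑ i, ‖h i‖ ^ 2 ≤ ∑ i : Fin d, r ^ 2 := by
        refine Finset.sum_le_sum fun i _ => ?_
        have := hh i
        simp at this
        rw [Real.norm_eq_abs]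
        exact pow_le_pow_left₀ (abs_nonneg _) this.le 2
    _ = d * r ^ 2 := by simp

lemma measurableSet_cubeRel {d : ℕ} (r : ℝ) :
    MeasurableSet {q : Ed d × Ed d | q.2 ∈ cube q.1 r} := by
  have : {q : Ed d × Ed d | q.2 ∈ cube q.1 r} =
      ⋂ i, {q : Ed d × Ed d | |q.2 i - q.1 i| < r / 2} := by
    ext x; simp [cube]
  rw [this]
  refine (isOpen_iInter_of_finite fun i => ?_).measurableSet
  exact isOpen_lt (by fun_prop) continuous_const

lemma avg_identity {d : ℕ} (A : Set (Ed d)) (r : ℝ) (f : Ed d → ℝ≥0∞)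
    (hA : MeasurableSet A) (hf : Measurable f) :
    ∫⁻ z in A, ∫⁻ x in cube z r, f x = ∫⁻ x, f x * volume (A ∩ cube x r) := by
  have h1 : ∀ z, ∫⁻ x in cube z r, f x =
      ∫⁻ x, {q : Ed d × Ed d | q.2 ∈ cube q.1 r}.indicator (fun q => f q.2) (z, x) := by
    intro z
    rw [← lintegral_indicator (measurableSet_cube z r)]
    rfl
  simp_rw [h1]
  rw [lintegral_lintegral_swap]
  · refine lintegral_congr fun x => ?_
    have : ∀ z, {q : Ed d × Ed d | q.2 ∈ cube q.1 r}.indicator (fun q => f q.2) (z, x) =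
        (cube x r).indicator (fun _ => f x) z := by
      intro z
      by_cases h : z ∈ cube x r
      · have h' : x ∈ cube z r := mem_cube_comm.1 h
        simp [indicator, h, h']
      · have h' : x ∉ cube z r := fun h' => h (mem_cube_comm.1 h')
        simp [indicator, h, h']
    simp_rw [this]
    rw [lintegral_indicator_const (measurableSet_cube x r),
      Measure.restrict_apply (measurableSet_cube x r), inter_comm]
  · exact ((hf.comp measurable_snd).indicator (measurableSet_cubeRel r)).aemeasurable

lemma avg_lower {d : ℕ} (c : Ed d) {R r : ℝ} (hr : 0 ≤ r) (f : Ed d → ℝ≥0∞)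
    (hf : Measurable f) :
    (∫⁻ x in cube c R, f x) * ENNReal.ofReal (r ^ d) ≤
      ∫⁻ z in cube c (R + r), ∫⁻ x in cube z r, f x := by
  rw [avg_identity _ _ _ (measurableSet_cube _ _) hf, ← lintegral_mul_const _ hf,
    ← lintegral_indicator (measurableSet_cube _ _)]
  refine lintegral_mono fun x => ?_
  by_cases hx : x ∈ cube c R
  · rw [indicator_of_mem hx, inter_eq_right.2 (cube_subset_add hx le_rfl), volume_cube _ hr]
  · rw [indicator_of_notMem hx]; exact zero_le

lemma avg_upper {d : ℕ} (c : Ed d) {R r S : ℝ} (hr : 0 ≤ r) (hS : R + r ≤ S) (f : Ed d → ℝ≥0∞)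
    (hf : AEMeasurable f (volume.restrict (cube c S))) :
    ∫⁻ z in cube c R, ∫⁻ x in cube z r, f x ≤
      (∫⁻ x in cube c S, f x) * ENNReal.ofReal (r ^ d) := by
  set F : Ed d → ℝ≥0∞ := (cube c S).indicator (hf.mk f) with hF
  have hFm : Measurable F := hf.measurable_mk.indicator (measurableSet_cube _ _)
  have hFae : ∀ᵐ x ∂(volume.restrict (cube c S)), f x = F x := by
    filter_upwards [hf.ae_eq_mk, ae_restrict_mem (measurableSet_cube c S)] with x h1 h2
    rw [h1, hF, indicator_of_mem h2]
  calc ∫⁻ z in cube c R, ∫⁻ x in cube z r, f x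
      = ∫⁻ z in cube c R, ∫⁻ x in cube z r, F x := by
        refine setLIntegral_congr_fun (measurableSet_cube _ _) fun z hz => ?_
        exact lintegral_congr_ae (ae_restrict_of_ae_restrict_of_subset
          (cube_subset_add hz hS) hFae)
    _ ≤ (∫⁻ x, F x) * ENNReal.ofReal (r ^ d) := by
        rw [avg_identity _ _ _ (measurableSet_cube _ _) hFm, ← lintegral_mul_const _ hFm]
        refine lintegral_mono fun x => ?_
        dsimp only
        gcongr
        rw [← volume_cube x hr]
        exact measure_mono inter_subset_right
    _ = _ := by
        rw [hF, lintegral_indicator (measurableSet_cube _ _), lintegral_congr_ae hf.ae_eq_mk]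

/-- Jensen / Cauchy-Schwarz with a weight. -/
lemma cs_weight {X : Type*} [MeasurableSpace X] {μ : Measure X} {ρ w : X → ℝ≥0∞}
    (hρ : AEMeasurable ρ μ) (hw : AEMeasurable w μ) (h1 : ∫⁻ x, ρ x ∂μ ≤ 1) :
    (∫⁻ x, ρ x * w x ∂μ) ^ 2 ≤ ∫⁻ x, ρ x * w x ^ 2 ∂μ := by
  have h := ENNReal.lintegral_mul_norm_pow_le (μ := μ) hρ (hρ.mul (hw.pow_const 2))
    (p := 1 / 2) (q := 1 / 2) (by norm_num) (by norm_num) (by norm_num)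
  have h2 : ∀ x, ρ x ^ (1 / 2 : ℝ) * (ρ * fun x => w x ^ 2) x ^ (1 / 2 : ℝ) = ρ x * w x := by
    intro x
    simp only [Pi.mul_apply]
    rw [ENNReal.mul_rpow_of_nonneg _ _ (by norm_num : (0 : ℝ) ≤ 1 / 2), ← mul_assoc,
      ← ENNReal.rpow_add_of_nonneg _ _ (by norm_num) (by norm_num), ← ENNReal.rpow_natCast,
      ← ENNReal.rpow_mul]
    norm_num
  simp_rw [h2] at h
  calc (∫⁻ x, ρ x * w x ∂μ) ^ 2 ≤
      ((∫⁻ x, ρ x ∂μ) ^ (1 / 2 : ℝ) * (∫⁻ x, ρ x * w x ^ 2 ∂μ) ^ (1 / 2 : ℝ)) ^ 2 :=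
        pow_le_pow_left' h 2
    _ ≤ (1 * (∫⁻ x, ρ x * w x ^ 2 ∂μ) ^ (1 / 2 : ℝ)) ^ 2 := by
        gcongr
        calc (∫⁻ x, ρ x ∂μ) ^ (1 / 2 : ℝ) ≤ 1 ^ (1 / 2 : ℝ) := by gcongr
          _ = 1 := by simp
    _ = _ := by
        rw [one_mul, ← ENNReal.rpow_natCast, ← ENNReal.rpow_mul]; norm_num

/-- squared length of the gradient, as an extended nonnegative real. -/
def gradSq {d : ℕ} (F : Ed d → ℝ) (z : Ed d) : ℝ≥0∞ := ∑ i, ‖pder F i z‖ₑ ^ 2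

lemma sum_single_smul {d : ℕ} (h : Ed d) :
    h = ∑ i, h i • (EuclideanSpace.single i (1 : ℝ) : Ed d) := by
  ext j
  simp [Pi.single_apply]

lemma fderiv_sq_le {d : ℕ} (F : Ed d → ℝ) (z h : Ed d) :
    ‖fderiv ℝ F z h‖ₑ ^ 2 ≤ ENNReal.ofReal (‖h‖ ^ 2) * gradSq F z := by
  have h1 : fderiv ℝ F z h = ∑ i, h i * pder F i z := by
    conv_lhs => rw [sum_single_smul h]
    rw [map_sum]
    refine Finset.sum_congr rfl fun i _ => ?_
    rw [map_smul, smul_eq_mul]; rfl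
  have h2 : ‖fderiv ℝ F z h‖ ^ 2 ≤ ‖h‖ ^ 2 * ∑ i, ‖pder F i z‖ ^ 2 := by
    rw [h1, Real.norm_eq_abs, sq_abs, EuclideanSpace.norm_sq_eq]
    have := Finset.sum_mul_sq_le_sq_mul_sq Finset.univ (fun i => h i) (fun i => pder F i z)
    simpa using this
  have h3 : gradSq F z = ENNReal.ofReal (∑ i, ‖pder F i z‖ ^ 2) := by
    rw [gradSq, ENNReal.ofReal_sum_of_nonneg (fun _ _ => by positivity)]
    refine Finset.sum_congr rfl fun i _ => ?_
    rw [ENNReal.ofReal_pow (norm_nonneg _), ofReal_norm]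
  rw [h3, ← ENNReal.ofReal_mul (by positivity), ← ofReal_norm, ← ENNReal.ofReal_pow (norm_nonneg _)]
  exact ENNReal.ofReal_le_ofReal h2

lemma continuous_pder {d : ℕ} {F : Ed d → ℝ} (hF : ContDiff ℝ 1 F) (i : Fin d) :
    Continuous (pder F i) := by
  have := hF.continuous_fderiv (by norm_num)
  exact this.clm_apply continuous_const

lemma measurable_gradSq {d : ℕ} {F : Ed d → ℝ} (hF : ContDiff ℝ 1 F) :
    Measurable (gradSq F) := by
  unfold gradSq
  refine Finset.measurable_fun_sum _ fun i _ => ?_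
  exact ((continuous_pder hF i).measurable.enorm).pow_const 2

lemma diff_sq_le {d : ℕ} {F : Ed d → ℝ} (hF : ContDiff ℝ 1 F) (x h : Ed d) :
    ‖F x - F (x + h)‖ₑ ^ 2 ≤
      ENNReal.ofReal (‖h‖ ^ 2) * ∫⁻ t in Ioc (0 : ℝ) 1, gradSq F (x + t • h) := by
  have hc : Continuous fun t : ℝ => fderiv ℝ F (x + t • h) h := by
    have := hF.continuous_fderiv (by norm_num)
    exact (this.comp (by fun_prop : Continuous fun t : ℝ => x + t • h)).clm_apply continuous_const
  have hd : ∀ t : ℝ, HasDerivAt (fun t : ℝ => F (x + t • h)) (fderiv ℝ F (x + t • h) h) t := by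
    intro t
    have h1 : HasFDerivAt F (fderiv ℝ F (x + t • h)) (x + t • h) :=
      (hF.differentiable (by norm_num) _).hasFDerivAt
    have h2 : HasDerivAt (fun t : ℝ => x + t • h) h t := by
      simpa using ((hasDerivAt_id t).smul_const h).const_add x
    exact h1.comp_hasDerivAt t h2
  have hi := intervalIntegral.integral_eq_sub_of_hasDerivAt (a := 0) (b := 1)
    (fun t _ => hd t) (hc.intervalIntegrable 0 1)
  rw [intervalIntegral.integral_of_le zero_le_one] at hi
  simp only [one_smul, zero_smul, add_zero] at hi
  have h1 : ‖F x - F (x + h)‖ₑ ≤ ∫⁻ t in Ioc (0 : ℝ) 1, 1 * ‖fderiv ℝ F (x + t • h) h‖ₑ := by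
    rw [← enorm_neg, neg_sub, ← hi]
    simp only [one_mul]
    exact enorm_integral_le_lintegral_enorm _
  calc ‖F x - F (x + h)‖ₑ ^ 2 ≤ _ := pow_le_pow_left' h1 2
    _ ≤ ∫⁻ t in Ioc (0 : ℝ) 1, 1 * ‖fderiv ℝ F (x + t • h) h‖ₑ ^ 2 :=
        cs_weight aemeasurable_const hc.measurable.enorm.aemeasurable (by simp)
    _ ≤ ∫⁻ t in Ioc (0 : ℝ) 1, ENNReal.ofReal (‖h‖ ^ 2) * gradSq F (x + t • h) := by
        refine lintegral_mono fun t => ?_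
        rw [one_mul]
        exact fderiv_sq_le _ _ _
    _ = _ := lintegral_const_mul' _ _ ENNReal.ofReal_ne_top

lemma poincare_smooth {d : ℕ} {F : Ed d → ℝ} (hF : ContDiff ℝ 1 F) (c : Ed d) {r : ℝ}
    (hr : 0 < r) :
    ∫⁻ x in cube c r, ∫⁻ y in cube c r, ‖F x - F y‖ₑ ^ 2 ≤
      ENNReal.ofReal (d * r ^ 2 * (2 * r) ^ d) * ∫⁻ z in cube c r, gradSq F z := by
  set Q := cube c r with hQ
  have hQm : MeasurableSet Q := measurableSet_cube c r
  set k : Ed d × Ed d → ℝ≥0∞ := fun q => Q.indicator 1 q.1 *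
    (Q.indicator 1 (q.1 + q.2) * ‖F q.1 - F (q.1 + q.2)‖ₑ ^ 2) with hk
  have hFm := hF.continuous.measurable
  have hkm : Measurable k := by
    have h1 : Measurable (Q.indicator (1 : Ed d → ℝ≥0∞)) := measurable_one.indicator hQm
    have h2 : Measurable fun q : Ed d × Ed d => q.1 + q.2 := measurable_fst.add measurable_snd
    refine (h1.comp measurable_fst).mul ((h1.comp h2).mul ?_)
    exact ((hFm.comp measurable_fst).sub (hFm.comp h2)).enorm.pow_const 2
  have e1 : ∫⁻ x in Q, ∫⁻ y in Q, ‖F x - F y‖ₑ ^ 2 = ∫⁻ x, ∫⁻ h, k (x, h) := by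
    rw [← lintegral_indicator hQm]
    refine lintegral_congr fun x => ?_
    by_cases hx : x ∈ Q
    · simp only [hk, indicator_of_mem hx, Pi.one_apply, one_mul]
      rw [← lintegral_indicator hQm, ← lintegral_add_left_eq_self _ x]
      refine lintegral_congr fun h => ?_
      by_cases hh : x + h ∈ Q
      · simp [hh]
      · simp [hh]
    · simp [hk, hx]
  rw [e1, lintegral_lintegral_swap hkm.aemeasurable]
  set I := ∫⁻ z in Q, gradSq F z with hI
  have key : ∀ h, ∫⁻ x, k (x, h) ≤
      (cube (0 : Ed d) (2 * r)).indicator (fun _ => ENNReal.ofReal (d * r ^ 2) * I) h := by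
    intro h
    by_cases hh : h ∈ cube (0 : Ed d) (2 * r)
    · rw [indicator_of_mem hh]
      calc ∫⁻ x, k (x, h) ≤ ∫⁻ x, ENNReal.ofReal (d * r ^ 2) *
            ∫⁻ t in Ioc (0 : ℝ) 1, Q.indicator (gradSq F) (x + t • h) := by
            refine lintegral_mono fun x => ?_
            by_cases hx : x ∈ Q
            · by_cases hxh : x + h ∈ Q
              · simp only [hk, indicator_of_mem hx, indicator_of_mem hxh, Pi.one_apply, one_mul]
                refine (diff_sq_le hF x h).trans ?_
                gcongr ?_ * ?_
                · exact ENNReal.ofReal_le_ofReal (norm_sq_le_of_cube hh)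
                · refine setLIntegral_mono' measurableSet_Ioc fun t ht => ?_
                  rw [indicator_of_mem (convex_cube hx hxh ht.1.le ht.2)]
              · simp [hk, hxh]
            · simp [hk, hx]
        _ = ENNReal.ofReal (d * r ^ 2) * ∫⁻ x, 
            ∫⁻ t in Ioc (0 : ℝ) 1, Q.indicator (gradSq F) (x + t • h) :=
            lintegral_const_mul' _ _ ENNReal.ofReal_ne_top
        _ = ENNReal.ofReal (d * r ^ 2) * ∫⁻ t in Ioc (0 : ℝ) 1, ∫⁻ x,
             Q.indicator (gradSq F) (x + t • h) := by
            rw [lintegral_lintegral_swap]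
            refine Measurable.aemeasurable ?_
            exact ((measurable_gradSq hF).indicator hQm).comp
              (by fun_prop : Measurable fun q : Ed d × ℝ => q.1 + q.2 • h)
        _ = ENNReal.ofReal (d * r ^ 2) * ∫⁻ t in Ioc (0 : ℝ) 1, I := by
            congr 1
            refine lintegral_congr fun t => ?_
            rw [lintegral_add_right_eq_self, lintegral_indicator hQm]
        _ = _ := by simp
    · rw [indicator_of_notMem hh]
      have : ∀ x, k (x, h) = 0 := by
        intro x
        by_cases hx : x ∈ Q
        · by_cases hxh : x + h ∈ Q
          · exfalso; apply hh
            intro i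
            have a := hx i
            have b := hxh i
            simp only [PiLp.add_apply, PiLp.zero_apply, sub_zero] at b ⊢
            rw [abs_lt] at *
            constructor <;> linarith [a.1, a.2, b.1, b.2]
          · simp [hk, hxh]
        · simp [hk, hx]
      simp [this]
  calc ∫⁻ h, ∫⁻ x, k (x, h) ≤ _ := lintegral_mono key
    _ = _ := by
      rw [lintegral_indicator_const (measurableSet_cube _ _), volume_cube _ (by positivity),
        ENNReal.ofReal_mul (p := d * r ^ 2) (by positivity)]
      ring

lemma fatou_double {d : ℕ} {S : Set (Ed d)} {F : ℕ → Ed d → ℝ} {f : Ed d → ℝ} {B : ℝ≥0∞}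
    (hF : ∀ n, Measurable (F n))
    (hlim' : ∀ᵐ x ∂(volume.restrict S), Tendsto (fun n => F n x) atTop (𝓝 (f x)))
    (hmain : ∀ n, ∫⁻ x in S, ∫⁻ y in S, ‖F n x - F n y‖ₑ ^ 2 ≤ B) :
    ∫⁻ x in S, ∫⁻ y in S, ‖f x - f y‖ₑ ^ 2 ≤ B := by
  have hm2 : ∀ n, Measurable fun q : Ed d × Ed d => ‖F n q.1 - F n q.2‖ₑ ^ 2 := by
    intro n
    have := hF n
    exact ((this.comp measurable_fst).sub (this.comp measurable_snd)).enorm.pow_const 2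
  calc ∫⁻ x in S, ∫⁻ y in S, ‖f x - f y‖ₑ ^ 2
      ≤ ∫⁻ x in S, liminf (fun n => ∫⁻ y in S, ‖F n x - F n y‖ₑ ^ 2) atTop := by
        refine lintegral_mono_ae ?_
        filter_upwards [hlim'] with x hx
        refine le_trans (le_of_eq ?_) (lintegral_liminf_le (fun n => ?_))
        · refine lintegral_congr_ae ?_
          filter_upwards [hlim'] with y hy
          refine (Tendsto.liminf_eq ?_).symm
          exact ENNReal.Tendsto.pow (hx.sub hy).enorm
        · exact (hm2 n).comp measurable_prodMk_left
    _ ≤ liminf (fun n => ∫⁻ x in S, ∫⁻ y in S, ‖F n x - F n y‖ₑ ^ 2) atTop := by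
        refine lintegral_liminf_le fun n => ?_
        exact (hm2 n).lintegral_prod_right'
    _ ≤ liminf (fun _ : ℕ => B) atTop :=
        liminf_le_liminf (Eventually.of_forall hmain)
    _ = _ := liminf_const _

lemma poincare_weak {d : ℕ} {U : Set (Ed d)} (hU : MeasurableSet U) {f : Ed d → ℝ}
    {w : Fin d → Ed d → ℝ} {c : Ed d} {r : ℝ} (hr : 0 < r) (hsub : cube c (2 * r) ⊆ U)
    (hf : IntegrableOn f U)
    (hw : ∀ i, AEStronglyMeasurable (w i) (volume.restrict (cube c (2 * r))))
    (hweak : ∀ φ : Ed d → ℝ, ContDiff ℝ (⊤ : ℕ∞) φ → HasCompactSupport φ → tsupport φ ⊆ U →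
      ∀ i : Fin d, ∫ x in U, f x * pder φ i x = - ∫ x in U, w i x * φ x) :
    ∫⁻ x in cube c r, ∫⁻ y in cube c r, ‖f x - f y‖ₑ ^ 2 ≤
      ENNReal.ofReal (d * r ^ 2 * (2 * r) ^ d) *
        ∫⁻ z in cube c (2 * r), ∑ i, ‖w i z‖ₑ ^ 2 := by
  set f' : Ed d → ℝ := U.indicator f with hf'
  have hf'i : Integrable f' := (integrable_indicator_iff hU).2 hf
  have hf'l : LocallyIntegrable f' := hf'i.locallyIntegrable
  let b : ℕ → ContDiffBump (0 : Ed d) := fun n =>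
    ⟨r / (4 * (n + 1)), r / (2 * (n + 1)), by positivity, by
      apply div_lt_div_of_pos_left hr (by positivity)
      have : (0 : ℝ) ≤ n := Nat.cast_nonneg n
      linarith⟩
  have hbout : ∀ n, (b n).rOut = r / (2 * (n + 1)) := fun n => rfl
  have hbin : ∀ n, (b n).rIn = r / (4 * (n + 1)) := fun n => rfl
  let ρ : ℕ → Ed d → ℝ := fun n => (b n).normed volume
  have hρs : ∀ n, ContDiff ℝ (⊤ : ℕ∞) (ρ n) := fun n => (b n).contDiff_normed
  have hρc : ∀ n, HasCompactSupport (ρ n) := fun n => (b n).hasCompactSupport_normed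
  have hρ0 : ∀ n x, 0 ≤ ρ n x := fun n => (b n).nonneg_normed
  have hρ1 : ∀ n, ∫ x, ρ n x = 1 := fun n => (b n).integral_normed
  have hρt : ∀ n, tsupport (ρ n) ⊆ closedBall 0 (r / 2) := by
    intro n
    change tsupport ((b n).normed volume) ⊆ _
    rw [(b n).tsupport_normed_eq]
    apply closedBall_subset_closedBall
    rw [hbout]
    apply div_le_div_of_nonneg_left hr.le (by norm_num)
    have : (0 : ℝ) ≤ n := Nat.cast_nonneg n
    linarith
  let F : ℕ → Ed d → ℝ := fun n =>
    convolution (ρ n) f' (ContinuousLinearMap.lsmul ℝ ℝ) volume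
  have hFs : ∀ n, ContDiff ℝ 1 (F n) := fun n =>
    (hρc n).contDiff_convolution_left (n := 1) _ ((hρs n).of_le (by exact_mod_cast le_top)) hf'l
  have hlim : ∀ᵐ x, Tendsto (fun n => F n x) atTop (𝓝 (f' x)) := by
    refine ContDiffBump.ae_convolution_tendsto_right_of_locallyIntegrable (K := 2) ?_ ?_ hf'l
    · simp_rw [hbout]
      have h1 : Tendsto (fun n : ℕ => (r / 2) * (1 / ((n : ℝ) + 1))) atTop (𝓝 ((r / 2) * 0)) :=
        tendsto_one_div_add_atTop_nhds_zero_nat.const_mul _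
      rw [mul_zero] at h1
      refine h1.congr fun n => ?_
      have : (n : ℝ) + 1 ≠ 0 := by positivity
      field_simp
    · refine Eventually.of_forall fun n => ?_
      rw [hbout, hbin]
      have : (n : ℝ) + 1 ≠ 0 := by positivity
      apply le_of_eq
      field_simp
      norm_num
  -- the derivative of the mollification
  have hder : ∀ n, ∀ x ∈ cube c r, ∀ i,
      pder (F n) i x = ∫ y in U, w i y * ρ n (x - y) := by
    intro n x hx i
    have h1 : HasFDerivAt (F n) _ x :=
      (hρc n).hasFDerivAt_convolution_left (ContinuousLinearMap.lsmul ℝ ℝ)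
        ((hρs n).of_le (by exact_mod_cast le_top)) hf'l x
    have h2 : pder (F n) i x = ∫ y, pder (ρ n) i (x - y) * f' y := by
      unfold pder
      rw [h1.fderiv, convolution_eq_swap, ContinuousLinearMap.integral_apply]
      · rfl
      · exact (((hρc n).fderiv ℝ).convolutionExists_left _
          ((hρs n).continuous_fderiv (by simp)) hf'l x).integrable_swap
    let φ : Ed d → ℝ := fun y => ρ n (x - y)
    have hφs : ContDiff ℝ (⊤ : ℕ∞) φ := (hρs n).comp (contDiff_const.sub contDiff_id)
    have hφt : tsupport φ ⊆ closedBall x (r / 2) := by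
      refine closure_minimal ?_ isClosed_closedBall
      intro y hy
      have : x - y ∈ closedBall (0 : Ed d) (r / 2) := hρt n (subset_tsupport _ hy)
      rw [mem_closedBall, dist_comm, dist_eq_norm]
      simpa using this
    have hφc : HasCompactSupport φ :=
      (isCompact_closedBall x (r / 2)).of_isClosed_subset (isClosed_tsupport _) hφt
    have hφU : tsupport φ ⊆ U := by
      refine hφt.trans (Subset.trans ?_ hsub)
      intro y hy j
      have a := hx j
      have b : |y j - x j| ≤ r / 2 := by
        have := PiLp.norm_apply_le (y - x) j
        rw [mem_closedBall, dist_eq_norm] at hy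
        simpa using this.trans hy
      have : |y j - c j| ≤ |y j - x j| + |x j - c j| := abs_sub_le _ _ _
      linarith
    have h3 := hweak φ hφs hφc hφU i
    have h4 : ∀ y, pder φ i y = - pder (ρ n) i (x - y) := by
      intro y
      have e1 : HasFDerivAt (ρ n) (fderiv ℝ (ρ n) (x - y)) (x - y) :=
        ((hρs n).differentiable (by simp) _).hasFDerivAt
      have e2 : HasFDerivAt (fun y : Ed d => x - y) (-ContinuousLinearMap.id ℝ (Ed d)) y :=
        (hasFDerivAt_id y).const_sub x
      have e3 := (e1.comp y e2).fderiv
      unfold pder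
      change fderiv ℝ (ρ n ∘ fun y => x - y) y _ = _
      rw [e3]
      simp
    have h5 : ∫ y, pder (ρ n) i (x - y) * f' y = - ∫ y in U, f y * pder φ i y := by
      rw [← integral_neg, ← integral_indicator hU]
      refine integral_congr_ae (Eventually.of_forall fun y => ?_)
      by_cases hy : y ∈ U
      · simp [hf', hy, h4, mul_comm]
      · simp [hf', hy]
    rw [h2, h5, h3, neg_neg]
  -- the gradient bound
  have hρe : ∀ n, ∫⁻ y, ENNReal.ofReal (ρ n y) = 1 := by
    intro n
    rw [← ofReal_integral_eq_lintegral_ofReal ((hρs n).continuous.integrable_of_hasCompactSupport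
      (hρc n)) (Eventually.of_forall (hρ0 n)), hρ1, ENNReal.ofReal_one]
  have hsupp : ∀ n, ∀ x ∈ cube c r, ∀ y, y ∉ cube c (2 * r) → ρ n (x - y) = 0 := by
    intro n x hx y hy
    by_contra hne
    apply hy
    have : x - y ∈ closedBall (0 : Ed d) (r / 2) := hρt n (subset_tsupport _ hne)
    intro j
    have a := hx j
    have b : |x j - y j| ≤ r / 2 := by
      have h1 := PiLp.norm_apply_le (x - y) j
      rw [mem_closedBall, dist_zero_right] at this
      simpa using h1.trans this
    rw [abs_sub_comm] at b
    have : |y j - c j| ≤ |y j - x j| + |x j - c j| := abs_sub_le _ _ _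
    linarith
  set Q2 := cube c (2 * r) with hQ2
  have hQ2m : MeasurableSet Q2 := measurableSet_cube _ _
  set μ2 : Measure (Ed d) := volume.restrict Q2 with hμ2
  have hpb : ∀ n, ∀ x ∈ cube c r, ∀ i,
      ‖pder (F n) i x‖ₑ ^ 2 ≤ ∫⁻ y in Q2, ENNReal.ofReal (ρ n (x - y)) * ‖w i y‖ₑ ^ 2 := by
    intro n x hx i
    have hm : Measurable fun y => ENNReal.ofReal (ρ n (x - y)) :=
      ((hρs n).continuous.comp (by fun_prop : Continuous fun y => x - y)).measurable.ennreal_ofReal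
    refine le_trans (pow_le_pow_left' ?_ 2) (cs_weight hm.aemeasurable (hw i).enorm ?_)
    · rw [hder n x hx i]
      have : ∫ y in U, w i y * ρ n (x - y) = ∫ y in Q2, w i y * ρ n (x - y) := by
        refine (setIntegral_eq_of_subset_of_forall_sdiff_eq_zero hU hsub ?_)
        intro y hy
        rw [hsupp n x hx y hy.2, mul_zero]
      rw [this]
      refine (enorm_integral_le_lintegral_enorm _).trans (le_of_eq ?_)
      refine lintegral_congr fun y => ?_
      rw [enorm_mul, mul_comm, Real.enorm_of_nonneg (hρ0 n _)]
    · calc _ ≤ ∫⁻ y, ENNReal.ofReal (ρ n (x - y)) := setLIntegral_le_lintegral _ _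
        _ = 1 := by rw [lintegral_sub_left_eq_self (fun y => ENNReal.ofReal (ρ n y)) x, hρe]
  have hgb : ∀ n, ∫⁻ z in cube c r, gradSq (F n) z ≤ ∫⁻ z in Q2, ∑ i, ‖w i z‖ₑ ^ 2 := by
    intro n
    have hwm : ∀ i, AEMeasurable (fun z => ‖w i z‖ₑ ^ 2) μ2 := fun i => (hw i).enorm.pow_const 2
    unfold gradSq
    rw [lintegral_finsetSum' _ (fun i _ => hwm i), lintegral_finsetSum _ (fun i _ =>
      ((continuous_pder (hFs n) i).measurable.enorm).pow_const 2)]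
    refine Finset.sum_le_sum fun i _ => ?_
    calc ∫⁻ z in cube c r, ‖pder (F n) i z‖ₑ ^ 2
        ≤ ∫⁻ z in cube c r, ∫⁻ y, ENNReal.ofReal (ρ n (z - y)) * ‖w i y‖ₑ ^ 2 ∂μ2 :=
          setLIntegral_mono' (measurableSet_cube _ _) fun x hx => hpb n x hx i
      _ = ∫⁻ y, (∫⁻ z in cube c r, ENNReal.ofReal (ρ n (z - y)) * ‖w i y‖ₑ ^ 2) ∂μ2 := by
          rw [lintegral_lintegral_swap]
          have hm : Measurable fun q : Ed d × Ed d => ENNReal.ofReal (ρ n (q.1 - q.2)) :=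
            ((hρs n).continuous.comp
              (by fun_prop : Continuous fun q : Ed d × Ed d => q.1 - q.2)).measurable.ennreal_ofReal
          exact hm.aemeasurable.mul ((hwm i).comp_snd)
      _ ≤ ∫⁻ y, ‖w i y‖ₑ ^ 2 ∂μ2 := by
          refine lintegral_mono fun y => ?_
          have hm : Measurable fun z => ENNReal.ofReal (ρ n (z - y)) :=
            ((hρs n).continuous.comp
              (by fun_prop : Continuous fun z => z - y)).measurable.ennreal_ofReal
          rw [lintegral_mul_const _ hm]
          calc _ ≤ 1 * ‖w i y‖ₑ ^ 2 := by
                gcongr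
                calc _ ≤ ∫⁻ z, ENNReal.ofReal (ρ n (z - y)) := setLIntegral_le_lintegral _ _
                  _ = 1 := by
                    rw [lintegral_sub_right_eq_self (fun y => ENNReal.ofReal (ρ n y)) y, hρe]
            _ = _ := one_mul _
  have hmain : ∀ n, ∫⁻ x in cube c r, ∫⁻ y in cube c r, ‖F n x - F n y‖ₑ ^ 2 ≤
      ENNReal.ofReal (d * r ^ 2 * (2 * r) ^ d) * ∫⁻ z in Q2, ∑ i, ‖w i z‖ₑ ^ 2 := by
    intro n
    exact (poincare_smooth (hFs n) c hr).trans (mul_le_mul' le_rfl (hgb n))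
  -- Fatou
  have hsubQ : cube c r ⊆ U := (cube_mono (by linarith)).trans hsub
  have hlim' : ∀ᵐ x ∂(volume.restrict (cube c r)), Tendsto (fun n => F n x) atTop (𝓝 (f x)) := by
    filter_upwards [ae_restrict_of_ae hlim, ae_restrict_mem (measurableSet_cube c r)] with x h1 h2
    rwa [hf', indicator_of_mem (hsubQ h2)] at h1
  exact fatou_double (fun n => (hFs n).continuous.measurable) hlim' hmain

lemma bern {t x y : ℝ} (ht0 : 0 ≤ t) (ht1 : t ≤ 1) (hx : 0 < x) (hy : 0 ≤ y) :
    t * x ^ (t - 1) * (x - y) ≤ x ^ t - y ^ t := by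
  have h := rpow_one_add_le_one_add_mul_self (s := y / x - 1) (p := t)
    (by have : 0 ≤ y / x := by positivity
        linarith) ht0 ht1
  rw [show 1 + (y / x - 1) = y / x by ring, Real.div_rpow hy hx.le] at h
  have hxt : 0 < x ^ t := Real.rpow_pos_of_pos hx t
  rw [div_le_iff₀ hxt] at h
  have e : x ^ (t - 1) = x ^ t / x := by rw [Real.rpow_sub_one hx.ne']
  rw [e]
  have : t * (x ^ t / x) * (x - y) = -(t * (y / x - 1) * x ^ t) := by field_simp; ring
  rw [this]
  linarith

lemma norm_Vm {p : ℝ} (hp : 1 < p) {ι : Type} [Fintype ι] (η : EuclideanSpace ℝ ι) :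
    ‖Vm p η‖ = ‖η‖ ^ (p / 2) := by
  unfold Vm
  rw [norm_smul, Real.norm_of_nonneg (by positivity)]
  rcases eq_or_ne ‖η‖ 0 with h | h
  · rw [h, mul_zero, Real.zero_rpow (by linarith)]
  · rw [← Real.rpow_add_one h]; congr 1; ring

lemma norm_Vm_sq {p : ℝ} (hp : 1 < p) {ι : Type} [Fintype ι] (η : EuclideanSpace ℝ ι) :
    ‖Vm p η‖ ^ 2 = ‖η‖ ^ p := by
  rw [norm_Vm hp, ← Real.rpow_natCast, ← Real.rpow_mul (norm_nonneg _)]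
  congr 1; push_cast; ring

set_option maxHeartbeats 1000000 in
lemma Vm_ineq {p : ℝ} (hp1 : 1 < p) (hp2 : p < 2) {ι : Type} [Fintype ι]
    (A B : EuclideanSpace ℝ ι) (hA : 0 < ‖A‖) :
    ‖A‖ ^ (p - 1) * ‖A - B‖ ≤ ‖A‖ ^ p / 4 + 36 * ‖Vm p A - Vm p B‖ ^ 2 := by
  set a := ‖A‖ with ha
  set b := ‖B‖ with hb
  have hb0 : 0 ≤ b := norm_nonneg _
  have hap : 0 < a ^ p := Real.rpow_pos_of_pos hA p
  have hsq : ‖Vm p A - Vm p B‖ ^ 2 = (a ^ (p / 2) - b ^ (p / 2)) ^ 2 +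
      2 * (a ^ ((p - 2) / 2) * b ^ ((p - 2) / 2)) * (a * b - ⟪A, B⟫) := by
    rw [norm_sub_sq_real, norm_Vm_sq hp1, norm_Vm_sq hp1]
    have h1 : ⟪Vm p A, Vm p B⟫ = a ^ ((p - 2) / 2) * b ^ ((p - 2) / 2) * ⟪A, B⟫ := by
      unfold Vm
      rw [real_inner_smul_left, real_inner_smul_right]; ring
    have h2 : ∀ x : ℝ, 0 ≤ x → x ^ ((p - 2) / 2) * x = x ^ (p / 2) := by
      intro x hx
      rcases eq_or_ne x 0 with h | h
      · rw [h, mul_zero, Real.zero_rpow (by linarith)]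
      · rw [← Real.rpow_add_one h]; congr 1; ring
    have h3 : ∀ x : ℝ, 0 ≤ x → (x ^ (p / 2)) ^ 2 = x ^ p := by
      intro x hx
      rw [← Real.rpow_natCast, ← Real.rpow_mul hx]
      congr 1; push_cast; ring
    rw [h1, ← ha, ← hb, ← h3 a hA.le, ← h3 b hb0]
    have := h2 a hA.le
    have h5 := h2 b hb0
    rw [← this, ← h5]
    ring
  have hcs : ⟪A, B⟫ ≤ a * b := real_inner_le_norm A B
  have hD : ‖A - B‖ ^ 2 = (a - b) ^ 2 + 2 * (a * b - ⟪A, B⟫) := by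
    rw [norm_sub_sq_real]; ring
  have hs0 : ∀ x : ℝ, 0 ≤ x → 0 ≤ x ^ ((p - 2) / 2) := fun x hx => Real.rpow_nonneg hx _
  have hp3 : (p / 2 - 1) = (p - 2) / 2 := by ring
  have hap1 : a ^ (p - 1) = a ^ p / a := Real.rpow_sub_one hA.ne' p
  have hh2 : ∀ x : ℝ, 0 < x → (x ^ ((p - 2) / 2)) ^ 2 = x ^ p / x ^ 2 := by
    intro x hx
    rw [← Real.rpow_natCast, ← Real.rpow_mul hx.le, ← Real.rpow_natCast x 2, ← Real.rpow_sub hx]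
    congr 1; push_cast; ring
  rcases lt_or_ge (3 * a) b with hba | hba
  · -- large B
    have hbp : 0 < b := by linarith
    have h1 := bern (t := p / 2) (x := b) (y := a) (by linarith) (by linarith) hbp hA.le
    rw [hp3] at h1
    have hbs : 0 < b ^ ((p - 2) / 2) := Real.rpow_pos_of_pos hbp _
    have h2 : b ^ ((p - 2) / 2) * b / 3 ≤ b ^ (p / 2) - a ^ (p / 2) := by
      refine le_trans ?_ h1
      have e1 : (1 : ℝ) / 2 * (2 / 3 * b) ≤ p / 2 * (b - a) := by nlinarith
      nlinarith
    have h3 : b ^ p / 9 ≤ (a ^ (p / 2) - b ^ (p / 2)) ^ 2 := by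
      have : (b ^ ((p - 2) / 2) * b / 3) ^ 2 = b ^ p / 9 := by
        rw [div_pow, mul_pow, hh2 b hbp]; field_simp; norm_num
      rw [← this, ← neg_sub (b ^ (p / 2)), neg_sq]
      exact pow_le_pow_left₀ (by positivity) h2 2
    have h4 : b ^ p / 9 ≤ ‖Vm p A - Vm p B‖ ^ 2 := by
      rw [hsq]
      have : 0 ≤ 2 * (a ^ ((p - 2) / 2) * b ^ ((p - 2) / 2)) * (a * b - ⟪A, B⟫) := by
        have := hs0 a hA.le
        have := sub_nonneg.2 hcs
        positivity
      linarith
    have h5 : ‖A - B‖ ≤ 2 * b := by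
      have := norm_sub_le A B
      linarith
    have h6 : a ^ (p - 1) ≤ b ^ (p - 1) :=
      Real.rpow_le_rpow hA.le (by linarith) (by linarith)
    have h7 : a ^ (p - 1) * ‖A - B‖ ≤ b ^ (p - 1) * (2 * b) := by gcongr
    have h8 : b ^ (p - 1) * b = b ^ p := by rw [Real.rpow_sub_one hbp.ne']; field_simp
    nlinarith
  · have h3s : (1 : ℝ) / 3 ≤ 3 ^ ((p - 2) / 2) := by
      rw [show (1 : ℝ) / 3 = 3 ^ (-1 : ℝ) by rw [Real.rpow_neg_one]; norm_num]
      exact Real.rpow_le_rpow_of_exponent_le (by norm_num) (by linarith)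
    have hmon : ∀ x : ℝ, 0 < x → x ≤ 3 * a → a ^ ((p - 2) / 2) / 3 ≤ x ^ ((p - 2) / 2) := by
      intro x hx hxa
      have h1 : (3 * a) ^ ((p - 2) / 2) ≤ x ^ ((p - 2) / 2) :=
        Real.rpow_le_rpow_of_nonpos hx hxa (by linarith)
      rw [Real.mul_rpow (by norm_num) hA.le] at h1
      have := hs0 a hA.le
      nlinarith
    have has := hs0 a hA.le
    have hkey : a ^ p / a ^ 2 / 36 * ‖A - B‖ ^ 2 ≤ ‖Vm p A - Vm p B‖ ^ 2 := by
      rw [hsq, hD, ← hh2 a hA]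
      have k1 : (a ^ ((p - 2) / 2) / 6 * |a - b|) ≤ |a ^ (p / 2) - b ^ (p / 2)| := by
        rcases le_total b a with hab | hab
        · have h1 := bern (t := p / 2) (x := a) (y := b) (by linarith) (by linarith) hA hb0
          rw [hp3] at h1
          rw [abs_of_nonneg (sub_nonneg.2 hab)]
          refine le_trans ?_ (h1.trans (le_abs_self _))
          have := sub_nonneg.2 hab
          gcongr
          nlinarith
        · have hbp : 0 < b := by linarith
          have h1 := bern (t := p / 2) (x := b) (y := a) (by linarith) (by linarith) hbp hA.le
          rw [hp3] at h1
          rw [abs_sub_comm, abs_of_nonneg (sub_nonneg.2 hab), abs_sub_comm]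
          refine le_trans ?_ (h1.trans (le_abs_self _))
          have := sub_nonneg.2 hab
          have := hmon b hbp hba
          gcongr
          nlinarith
      have k2 : (a ^ ((p - 2) / 2)) ^ 2 / 36 * (a - b) ^ 2 ≤ (a ^ (p / 2) - b ^ (p / 2)) ^ 2 := by
        have := pow_le_pow_left₀ (by positivity) k1 2
        rw [sq_abs, mul_pow, sq_abs, div_pow] at this
        norm_num at this
        exact this
      have k3 : (a ^ ((p - 2) / 2)) ^ 2 / 36 * (2 * (a * b - ⟪A, B⟫)) ≤
          2 * (a ^ ((p - 2) / 2) * b ^ ((p - 2) / 2)) * (a * b - ⟪A, B⟫) := by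
        rcases hb0.eq_or_lt with h0 | hbp
        · have hB : B = 0 := norm_eq_zero.1 (hb ▸ h0.symm)
          rw [hB, ← h0]; simp
        · have h1 := hmon b hbp hba
          have h2 := sub_nonneg.2 hcs
          have h3 : (a ^ ((p - 2) / 2)) ^ 2 / 36 ≤ a ^ ((p - 2) / 2) * b ^ ((p - 2) / 2) := by
            nlinarith [mul_le_mul_of_nonneg_left h1 has]
          nlinarith
      linarith
    have h9 : a ^ (p - 1) * ‖A - B‖ ≤ a ^ p / 4 + a ^ p / a ^ 2 * ‖A - B‖ ^ 2 := by
      rw [hap1]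
      have : a ^ p / 4 + a ^ p / a ^ 2 * ‖A - B‖ ^ 2 - a ^ p / a * ‖A - B‖ =
          a ^ p * (1 / 2 - ‖A - B‖ / a) ^ 2 := by field_simp; ring
      have hq := mul_nonneg hap.le (sq_nonneg (1 / 2 - ‖A - B‖ / a))
      rw [← this] at hq
      linarith only [hq]
    linarith

lemma exists_bump (d : ℕ) : ∃ B : ℝ, 0 < B ∧ ∀ (z : Ed d) (r : ℝ), 0 < r →
    ∃ φ : Ed d → ℝ, ContDiff ℝ (⊤ : ℕ∞) φ ∧ HasCompactSupport φ ∧ tsupport φ ⊆ cube z r ∧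
      (∀ x, 0 ≤ φ x) ∧ ∫ x, φ x = 1 ∧ (∀ x, φ x ≤ B / r ^ d) ∧
      ∀ i x, |pder φ i x| ≤ B / (r ^ d * r) := by
  let b : ContDiffBump (0 : Ed d) := ⟨1 / 8, 1 / 4, by norm_num, by norm_num⟩
  let ψ : Ed d → ℝ := b.normed volume
  have hψs : ContDiff ℝ (⊤ : ℕ∞) ψ := b.contDiff_normed
  have hψc : HasCompactSupport ψ := b.hasCompactSupport_normed
  have hψt : tsupport ψ ⊆ closedBall 0 (1 / 4) := b.tsupport_normed_eq.subset
  obtain ⟨B1, hB1⟩ := hψc.exists_bound_of_continuous hψs.continuous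
  obtain ⟨B2, hB2⟩ := (hψc.fderiv ℝ).exists_bound_of_continuous
    (hψs.continuous_fderiv (by simp))
  refine ⟨max B1 B2 + 1, ?_, ?_⟩
  · have := (norm_nonneg _).trans (hB1 0)
    have := le_max_left B1 B2
    linarith
  intro z r hr
  have hrd : 0 < r ^ d := by positivity
  have hr1 : r⁻¹ ≠ 0 := by positivity
  let T : Ed d → Ed d := fun x => r⁻¹ • (x - z)
  have hTd : ∀ x, HasFDerivAt T (r⁻¹ • ContinuousLinearMap.id ℝ (Ed d)) x := fun x =>
    ((hasFDerivAt_id x).sub_const z).const_smul r⁻¹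
  have hTs : ContDiff ℝ (⊤ : ℕ∞) T := (contDiff_id.sub contDiff_const).const_smul r⁻¹
  let φ : Ed d → ℝ := fun x => (r ^ d)⁻¹ * ψ (T x)
  have hφt : tsupport φ ⊆ closedBall z (r / 4) := by
    refine closure_minimal ?_ isClosed_closedBall
    intro y hy
    have h0 : ψ (T y) ≠ 0 := fun h => hy (by simp [φ, h])
    have h1 : T y ∈ closedBall (0 : Ed d) (1 / 4) := hψt (subset_tsupport _ h0)
    rw [mem_closedBall, dist_zero_right, norm_smul, Real.norm_of_nonneg (by positivity),
      inv_mul_le_iff₀ hr] at h1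
    rw [mem_closedBall, dist_eq_norm]
    linarith
  refine ⟨φ, contDiff_const.mul (hψs.comp hTs),
    (isCompact_closedBall z (r / 4)).of_isClosed_subset (isClosed_tsupport _) hφt,
    hφt.trans ?_, ?_, ?_, ?_, ?_⟩
  · intro y hy j
    have := PiLp.norm_apply_le (y - z) j
    rw [mem_closedBall, dist_eq_norm] at hy
    have h2 : |y j - z j| ≤ r / 4 := by simpa using this.trans hy
    linarith
  · intro x
    exact mul_nonneg (by positivity) (b.nonneg_normed _)
  · have h1 : ∫ x, ψ (r⁻¹ • (x - z)) = ∫ x, ψ (r⁻¹ • x) :=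
      integral_sub_right_eq_self (fun x => ψ (r⁻¹ • x)) z
    change ∫ x, (r ^ d)⁻¹ * ψ (r⁻¹ • (x - z)) = 1
    rw [integral_const_mul, h1, Measure.integral_comp_inv_smul]
    have : ∫ x, ψ x = 1 := b.integral_normed
    rw [this, finrank_euclideanSpace, Fintype.card_fin, abs_of_pos hrd, smul_eq_mul, mul_one]
    exact inv_mul_cancel₀ hrd.ne'
  · intro x
    have h1 := (le_abs_self _).trans (hB1 (T x))
    have := le_max_left B1 B2
    change (r ^ d)⁻¹ * ψ (T x) ≤ _
    rw [div_eq_inv_mul]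
    gcongr
    linarith
  · intro i x
    have e1 : HasFDerivAt ψ (fderiv ℝ ψ (T x)) (T x) :=
      (hψs.differentiable (by simp) _).hasFDerivAt
    have e3 := ((e1.comp x (hTd x)).const_mul (r ^ d)⁻¹).fderiv
    have e4 : pder φ i x = (r ^ d)⁻¹ * (r⁻¹ * pder ψ i (T x)) := by
      unfold pder
      change fderiv ℝ (fun y => (r ^ d)⁻¹ * (ψ ∘ T) y) x _ = _
      rw [e3]
      simp
    have e5 : |pder ψ i (T x)| ≤ max B1 B2 + 1 := by
      have h1 := (fderiv ℝ ψ (T x)).le_opNorm (EuclideanSpace.single i 1)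
      have h2 := hB2 (T x)
      simp at h1
      have := le_max_right B1 B2
      unfold pder
      linarith
    rw [e4, abs_mul, abs_mul, abs_of_pos (by positivity), abs_of_pos (by positivity : 0 < r⁻¹),
      div_eq_inv_mul, mul_inv, mul_assoc]
    gcongr

lemma enorm_sq_eq_sum {ι : Type} [Fintype ι] (ξ : EuclideanSpace ℝ ι) :
    ‖ξ‖ₑ ^ 2 = ∑ a, ‖ξ a‖ₑ ^ 2 := by
  rw [← ofReal_norm, ← ENNReal.ofReal_pow (norm_nonneg _), EuclideanSpace.norm_sq_eq,
    ENNReal.ofReal_sum_of_nonneg (fun _ _ => by positivity)]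
  refine Finset.sum_congr rfl fun a _ => ?_
  rw [ENNReal.ofReal_pow (norm_nonneg _), ofReal_norm]

lemma measurable_Vm (p : ℝ) {ι : Type} [Fintype ι] :
    Measurable (Vm p : EuclideanSpace ℝ ι → EuclideanSpace ℝ ι) := by
  unfold Vm
  exact (measurable_norm.pow_const _).smul measurable_id

lemma measurable_eval {ι : Type} [Fintype ι] (a : ι) :
    Measurable fun ξ : EuclideanSpace ℝ ι => ξ a := by
  exact (EuclideanSpace.proj a : EuclideanSpace ℝ ι →L[ℝ] ℝ).continuous.measurable

lemma memLp_Vm {p : ℝ} (hp1 : 1 < p) {d : ℕ} {ι : Type} [Fintype ι] {U : Set (Ed d)}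
    {g : Ed d → EuclideanSpace ℝ ι} (hgm : Measurable g)
    (hg : MemLp g (ENNReal.ofReal p) (volume.restrict U)) :
    MemLp (fun x => Vm p (g x)) 2 (volume.restrict U) := by
  have hm : Measurable fun x => Vm p (g x) := (measurable_Vm p).comp hgm
  rw [memLp_two_iff_integrable_sq_norm hm.aestronglyMeasurable]
  simp_rw [norm_Vm_sq hp1]
  have := hg.integrable_norm_rpow (by simp; linarith) (by simp)
  rwa [ENNReal.toReal_ofReal (by linarith)] at this

lemma integrable_eval {d : ℕ} {ι : Type} [Fintype ι] {μ : Measure (Ed d)}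
    {f : Ed d → EuclideanSpace ℝ ι} (hf : Integrable f μ) (a : ι) :
    Integrable (fun x => f x a) μ :=
  (EuclideanSpace.proj a : EuclideanSpace ℝ ι →L[ℝ] ℝ).integrable_comp hf

lemma poincare_vec {d : ℕ} {ι : Type} [Fintype ι] {U : Set (Ed d)} (hU : MeasurableSet U)
    {f : Ed d → EuclideanSpace ℝ ι} (hfm : Measurable f)
    {W : Ed d → EuclideanSpace ℝ (ι × Fin d)} {c : Ed d} {r : ℝ} (hr : 0 < r)
    (hsub : cube c (2 * r) ⊆ U) (hf : IntegrableOn f U)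
    (hW : AEStronglyMeasurable W (volume.restrict (cube c (2 * r))))
    (hweak : IsWeakGrad U f W) :
    ∫⁻ x in cube c r, ∫⁻ y in cube c r, ‖f x - f y‖ₑ ^ 2 ≤
      ENNReal.ofReal (d * r ^ 2 * (2 * r) ^ d) * ∫⁻ z in cube c (2 * r), ‖W z‖ₑ ^ 2 := by
  have hm : ∀ a, Measurable fun q : Ed d × Ed d => ‖f q.1 a - f q.2 a‖ₑ ^ 2 := by
    intro a
    have := (measurable_eval a).comp hfm
    exact ((this.comp measurable_fst).sub (this.comp measurable_snd)).enorm.pow_const 2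
  have hWa : ∀ k, AEStronglyMeasurable (fun z => W z k) (volume.restrict (cube c (2 * r))) :=
    fun k => (EuclideanSpace.proj k : EuclideanSpace ℝ (ι × Fin d) →L[ℝ] ℝ).continuous.comp_aestronglyMeasurable hW
  have h1 : ∫⁻ x in cube c r, ∫⁻ y in cube c r, ‖f x - f y‖ₑ ^ 2 =
      ∑ a, ∫⁻ x in cube c r, ∫⁻ y in cube c r, ‖f x a - f y a‖ₑ ^ 2 := by
    have e1 : ∀ x, ∫⁻ y in cube c r, ‖f x - f y‖ₑ ^ 2 =
        ∑ a, ∫⁻ y in cube c r, ‖f x a - f y a‖ₑ ^ 2 := by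
      intro x
      have e2 := lintegral_finsetSum (μ := volume.restrict (cube c r)) Finset.univ
        (f := fun (a : ι) (y : Ed d) => ‖f x a - f y a‖ₑ ^ 2)
        (fun a _ => (hm a).comp (measurable_prodMk_left (x := x)))
      rw [← e2]
      refine lintegral_congr fun y => ?_
      rw [enorm_sq_eq_sum]
      simp only [PiLp.sub_apply]
    have e3 := lintegral_finsetSum (μ := volume.restrict (cube c r)) Finset.univ
        (f := fun (a : ι) (x : Ed d) => ∫⁻ y in cube c r, ‖f x a - f y a‖ₑ ^ 2)
        (fun a _ => Measurable.lintegral_prod_right'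
          (f := fun q : Ed d × Ed d => ‖f q.1 a - f q.2 a‖ₑ ^ 2) (hm a))
    rw [← e3]
    exact lintegral_congr e1
  have h2 : ∫⁻ z in cube c (2 * r), ‖W z‖ₑ ^ 2 =
      ∑ a, ∫⁻ z in cube c (2 * r), ∑ i, ‖W z (a, i)‖ₑ ^ 2 := by
    rw [← lintegral_finsetSum']
    · refine lintegral_congr fun z => ?_
      rw [enorm_sq_eq_sum, Fintype.sum_prod_type]
    · intro a _
      exact Finset.aemeasurable_fun_sum _ fun i _ => (hWa (a, i)).enorm.pow_const 2
  rw [h1, h2, Finset.mul_sum]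
  refine Finset.sum_le_sum fun a _ => ?_
  exact poincare_weak hU hr hsub (integrable_eval hf a) (fun i => hWa (a, i))
    (fun φ h1 h2 h3 i => hweak φ h1 h2 h3 a i)

lemma tsupport_pder {d : ℕ} (φ : Ed d → ℝ) {i : Fin d} {x : Ed d} (hx : x ∉ tsupport φ) :
    pder φ i x = 0 := by
  unfold pder
  rw [fderiv_of_notMem_tsupport ℝ hx]; rfl

lemma integral_pder_eq_zero {d : ℕ} {φ : Ed d → ℝ} (hφ : ContDiff ℝ (⊤ : ℕ∞) φ)
    (hc : HasCompactSupport φ) (i : Fin d) : ∫ x, pder φ i x = 0 := by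
  have hInt : Integrable (pder φ i) :=
    (continuous_pder (hφ.of_le (by exact_mod_cast le_top)) i).integrable_of_hasCompactSupport
      (hc.mono' (fun x hx => by
        by_contra h; exact hx (tsupport_pder φ h)))
  have := integral_mul_fderiv_eq_neg_fderiv_mul_of_integrable (μ := (volume : Measure (Ed d)))
    (f := fun _ => (1 : ℝ)) (g := φ) (v := EuclideanSpace.single i 1)
    (by simp) (by
      have hInt' : Integrable (fun x => fderiv ℝ φ x (EuclideanSpace.single i 1)) := hInt
      simpa using hInt')
    (by simpa using hφ.continuous.integrable_of_hasCompactSupport hc)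
    (fun x _ => differentiableAt_const _) (fun x _ => hφ.differentiable (by simp) x)
  change ∫ x, fderiv ℝ φ x (EuclideanSpace.single i 1) = 0
  simpa using this

lemma avg_small {d N : ℕ} {U : Set (Ed d)} (hU : MeasurableSet U)
    {u v : Ed d → En N} {g : Ed d → Mat N d} (hu : IntegrableOn u U)
    (huv : u =ᵐ[volume.restrict U] v) (hweak : IsWeakGrad U u g)
    {z : Ed d} {r M B : ℝ} (hr : 0 < r) (hsub : cube z r ⊆ U) (hM : 0 ≤ M)
    (hosc : ∀ x ∈ cube z r, ‖v x - v z‖ ≤ M)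
    {φ : Ed d → ℝ} (hφs : ContDiff ℝ (⊤ : ℕ∞) φ) (hφc : HasCompactSupport φ)
    (hφt : tsupport φ ⊆ cube z r) (hφb : ∀ i x, |pder φ i x| ≤ B / (r ^ d * r))
    (a : Fin N) (i : Fin d) : |∫ x in U, g x (a, i) * φ x| ≤ M * B / r := by
  have h1 := hweak φ hφs hφc (hφt.trans hsub) a i
  have hpc := continuous_pder (hφs.of_le (by exact_mod_cast le_top)) i
  have hz : ∀ x, x ∉ cube z r → pder φ i x = 0 := fun x hx =>
    tsupport_pder φ (fun h => hx (hφt h))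
  have hpi : Integrable (pder φ i) := hpc.integrable_of_hasCompactSupport
      (hφc.mono' (fun x hx => by
        by_contra h; exact hx (tsupport_pder φ h)))
  have h2 : ∫ x in U, pder φ i x = 0 := by
    rw [setIntegral_eq_integral_of_forall_compl_eq_zero (fun x hx => hz x fun h => hx (hsub h))]
    exact integral_pder_eq_zero hφs hφc i
  have h3 : ∫ x in U, u x a * pder φ i x = ∫ x in U, (u x a - v z a) * pder φ i x := by
    simp_rw [sub_mul]
    rw [integral_sub, integral_const_mul, h2, mul_zero, sub_zero]
    · exact (integrable_eval hu a).mul_bdd (c := B / (r ^ d * r)) hpc.aestronglyMeasurable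
        (Eventually.of_forall fun x => hφb i x)
    · exact (hpi.const_mul _).integrableOn
  have h4 : ∫ x in U, (u x a - v z a) * pder φ i x =
      ∫ x in cube z r, (u x a - v z a) * pder φ i x := by
    refine setIntegral_eq_of_subset_of_forall_sdiff_eq_zero hU hsub ?_
    intro y hy
    rw [hz y hy.2, mul_zero]
  have h5 : ‖∫ x in cube z r, (u x a - v z a) * pder φ i x‖ ≤
      M * (B / (r ^ d * r)) * volume.real (cube z r) := by
    refine norm_setIntegral_le_of_norm_le_const_ae ?_ ?_
    · rw [volume_cube _ hr.le]; exact ENNReal.ofReal_lt_top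
    · filter_upwards [ae_restrict_of_ae_restrict_of_subset hsub huv,
        ae_restrict_mem (measurableSet_cube z r)] with x e1 e2
      rw [e1, norm_mul]
      have e3 := (PiLp.norm_apply_le (v x - v z) a).trans (hosc x e2)
      exact mul_le_mul e3 (hφb i x) (norm_nonneg _) hM
  have h6 : volume.real (cube z r) = r ^ d := by
    rw [measureReal_def, volume_cube _ hr.le, ENNReal.toReal_ofReal (by positivity)]
  rw [h6] at h5
  rw [h3, h4] at h1
  have h7 : |∫ x in U, g x (a, i) * φ x| = ‖∫ x in cube z r, (u x a - v z a) * pder φ i x‖ := by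
    rw [h1, norm_neg, Real.norm_eq_abs]
  rw [h7]
  refine h5.trans (le_of_eq ?_)
  field_simp

lemma tile_pt {d N : ℕ} {p : ℝ} (hp1 : 1 < p) (hp2 : p < 2) {U : Set (Ed d)}
    (hU : MeasurableSet U) (hUf : volume U ≠ ∞)
    {g : Ed d → Mat N d} (hgm : Measurable g)
    (hg : MemLp g (ENNReal.ofReal p) (volume.restrict U))
    {z : Ed d} {r m B : ℝ} (hr : 0 < r) (hB : 0 < B) (hsub : cube z r ⊆ U) (hm : 0 ≤ m)
    {φ : Ed d → ℝ} (hφs : ContDiff ℝ (⊤ : ℕ∞) φ) (hφc : HasCompactSupport φ)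
    (hφt : tsupport φ ⊆ cube z r) (hφ0 : ∀ x, 0 ≤ φ x) (hφ1 : ∫ x, φ x = 1)
    (hφB : ∀ x, φ x ≤ B / r ^ d)
    (havg : ∀ a i, |∫ x in U, g x (a, i) * φ x| ≤ m)
    {l : ℝ} (hl : 0 < l) (hml : 2 * ((N * d + 1) * m) ≤ l) {A : Mat N d} (hA : l < ‖A‖) :
    ENNReal.ofReal (l ^ p * r ^ d / (144 * B)) ≤
      ∫⁻ y in cube z r, ‖Vm p A - Vm p (g y)‖ₑ ^ 2 := by
  have : IsFiniteMeasure (volume.restrict U) := ⟨by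
    rw [Measure.restrict_apply_univ]; exact hUf.lt_top⟩
  have hφcont := hφs.continuous
  have hz : ∀ x, x ∉ cube z r → φ x = 0 := fun x hx =>
    image_eq_zero_of_notMem_tsupport fun h => hx (hφt h)
  have hφi : Integrable φ (volume.restrict U) :=
    (hφcont.integrable_of_hasCompactSupport hφc).integrableOn
  have hφU : ∫ x in U, φ x = 1 := by
    rw [setIntegral_eq_integral_of_forall_compl_eq_zero (fun x hx => hz x fun h => hx (hsub h)),
      hφ1]
  have hbd : ∀ x, ‖φ x‖ ≤ B / r ^ d := fun x => by
    rw [Real.norm_of_nonneg (hφ0 x)]; exact hφB x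
  have hgi : Integrable g (volume.restrict U) :=
    hg.integrable (by rw [ENNReal.one_le_ofReal]; exact hp1.le)
  have hφg : Integrable (fun x => φ x • g x) (volume.restrict U) :=
    hgi.bdd_smul (B / r ^ d) hφcont.aestronglyMeasurable (Eventually.of_forall hbd)
  set J : Mat N d := ∫ x in U, φ x • g x with hJ
  have hJn : ‖J‖ ≤ (N * d + 1) * m := by
    have hJk : ∀ k : Fin N × Fin d, ‖J k‖ ≤ m := by
      intro k
      have : J k = ∫ x in U, g x k * φ x := by
        have := (EuclideanSpace.proj k : EuclideanSpace ℝ (Fin N × Fin d) →L[ℝ] ℝ).integral_comp_comm hφg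
        rw [hJ]
        refine Eq.trans this.symm ?_
        refine integral_congr_ae (Eventually.of_forall fun x => ?_)
        simp [mul_comm]
      rw [this]
      exact havg k.1 k.2
    refine le_of_sq_le_sq ?_ (by positivity)
    rw [EuclideanSpace.norm_sq_eq]
    calc ∑ k, ‖J k‖ ^ 2 ≤ ∑ k : Fin N × Fin d, m ^ 2 :=
          Finset.sum_le_sum fun k _ => pow_le_pow_left₀ (norm_nonneg _) (hJk k) 2
      _ = (N * d) * m ^ 2 := by simp
      _ ≤ ((N * d + 1) * m) ^ 2 := by
          rw [mul_pow]
          gcongr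
          have : (0 : ℝ) ≤ N * d := by positivity
          nlinarith
  have ha0 : 0 < ‖A‖ := hl.trans hA
  set a := ‖A‖ with ha
  have hAg : Integrable (fun x => A - g x) (volume.restrict U) := (integrable_const A).sub hgi
  have hAJ : A - J = ∫ x in U, φ x • (A - g x) := by
    simp_rw [smul_sub]
    rw [integral_sub (hφi.smul_const A) hφg, integral_smul_const, hφU, one_smul]
  have hφAg : Integrable (fun x => φ x * ‖A - g x‖) (volume.restrict U) :=
    hAg.norm.bdd_mul (c := B / r ^ d) hφcont.aestronglyMeasurable (Eventually.of_forall hbd)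
  have h1 : a / 2 ≤ ∫ x in U, φ x * ‖A - g x‖ := by
    have e1 : ‖A - J‖ ≤ ∫ x in U, φ x * ‖A - g x‖ := by
      rw [hAJ]
      refine (norm_integral_le_integral_norm _).trans (le_of_eq ?_)
      refine integral_congr_ae (Eventually.of_forall fun x => ?_)
      simp only [norm_smul, Real.norm_of_nonneg (hφ0 x)]
    have e2 : a - ‖J‖ ≤ ‖A - J‖ := norm_sub_norm_le A J
    linarith
  have hV2 := memLp_Vm hp1 hgm hg
  have hVm : Measurable fun x => Vm p A - Vm p (g x) :=
    measurable_const.sub ((measurable_Vm p).comp hgm)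
  have hD : Integrable (fun x => ‖Vm p A - Vm p (g x)‖ ^ 2) (volume.restrict U) :=
    (memLp_two_iff_integrable_sq_norm hVm.aestronglyMeasurable).1 ((memLp_const _).sub hV2)
  have hφD : Integrable (fun x => φ x * ‖Vm p A - Vm p (g x)‖ ^ 2) (volume.restrict U) :=
    hD.bdd_mul (c := B / r ^ d) hφcont.aestronglyMeasurable (Eventually.of_forall hbd)
  have h2 : a ^ p / 2 ≤ a ^ p / 4 + 36 * ∫ x in U, φ x * ‖Vm p A - Vm p (g x)‖ ^ 2 := by
    have e0 : a ^ p / 2 = a ^ (p - 1) * (a / 2) := by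
      rw [Real.rpow_sub_one ha0.ne']; field_simp
    have e1 : a ^ (p - 1) * ∫ x in U, φ x * ‖A - g x‖ ≤
        ∫ x in U, (φ x * (a ^ p / 4) + 36 * (φ x * ‖Vm p A - Vm p (g x)‖ ^ 2)) := by
      rw [← integral_const_mul]
      refine integral_mono (hφAg.const_mul _) ((hφi.mul_const _).add (hφD.const_mul 36)) ?_
      intro x
      have := mul_le_mul_of_nonneg_left (Vm_ineq hp1 hp2 A (g x) ha0) (hφ0 x)
      simp only
      linarith
    rw [integral_add (hφi.mul_const _) (hφD.const_mul 36), integral_mul_const, hφU,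
      integral_const_mul, one_mul] at e1
    rw [e0]
    refine le_trans ?_ e1
    exact mul_le_mul_of_nonneg_left h1 (by positivity)
  have h3 : ∫ x in U, φ x * ‖Vm p A - Vm p (g x)‖ ^ 2 ≤
      B / r ^ d * ∫ x in cube z r, ‖Vm p A - Vm p (g x)‖ ^ 2 := by
    have : ∫ x in U, φ x * ‖Vm p A - Vm p (g x)‖ ^ 2 =
        ∫ x in cube z r, φ x * ‖Vm p A - Vm p (g x)‖ ^ 2 := by
      refine setIntegral_eq_of_subset_of_forall_sdiff_eq_zero hU hsub ?_
      intro y hy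
      rw [hz y hy.2, zero_mul]
    rw [this, ← integral_const_mul]
    refine integral_mono (hφD.mono_measure (Measure.restrict_mono hsub le_rfl))
      ((hD.mono_measure (Measure.restrict_mono hsub le_rfl)).const_mul _) fun x => ?_
    exact mul_le_mul_of_nonneg_right (hφB x) (by positivity)
  have h4 : l ^ p ≤ a ^ p := Real.rpow_le_rpow hl.le hA.le (by linarith)
  have h5 : l ^ p * r ^ d / (144 * B) ≤ ∫ x in cube z r, ‖Vm p A - Vm p (g x)‖ ^ 2 := by
    set I := ∫ x in cube z r, ‖Vm p A - Vm p (g x)‖ ^ 2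
    have e : l ^ p ≤ 144 * (B / r ^ d * I) := by linarith
    rw [div_le_iff₀ (by positivity)]
    have hrd : 0 < r ^ d := by positivity
    calc l ^ p * r ^ d ≤ 144 * (B / r ^ d * I) * r ^ d := by gcongr
      _ = I * (144 * B) := by field_simp
  refine (ENNReal.ofReal_le_ofReal h5).trans (le_of_eq ?_)
  rw [ofReal_integral_eq_lintegral_ofReal (hD.mono_measure (Measure.restrict_mono hsub le_rfl))
    (Eventually.of_forall fun x => by positivity)]
  refine lintegral_congr fun x => ?_
  rw [ENNReal.ofReal_pow (norm_nonneg _), ofReal_norm]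

lemma tile (d N : ℕ) {p : ℝ} (hp1 : 1 < p) (hp2 : p < 2) :
    ∃ C1 C2 : ℝ, 0 < C1 ∧ 0 < C2 ∧ ∀ (U : Set (Ed d)), MeasurableSet U → volume U ≠ ∞ →
    ∀ (u v : Ed d → En N) (g : Ed d → Mat N d)
        (W : Ed d → EuclideanSpace ℝ ((Fin N × Fin d) × Fin d)),
      MemLp u (ENNReal.ofReal p) (volume.restrict U) → u =ᵐ[volume.restrict U] v →
      IsWeakGrad U u g → Measurable g → MemLp g (ENNReal.ofReal p) (volume.restrict U) →
      IsWeakGrad U (fun x => Vm p (g x)) W →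
    ∀ (z : Ed d) (r : ℝ), 0 < r → cube z (2 * r) ⊆ U →
      AEStronglyMeasurable W (volume.restrict (cube z (2 * r))) →
    ∀ M l : ℝ, 0 < l → (∀ x ∈ cube z r, ‖v x - v z‖ ≤ M) → C1 * (M / r) ≤ l →
      volume ({x | l < ‖g x‖} ∩ cube z r) * ENNReal.ofReal (l ^ p) ≤
        ENNReal.ofReal (C2 * r ^ 2) * ∫⁻ x in cube z (2 * r), ‖W x‖ₑ ^ 2 := by
  obtain ⟨B, hB, hbump⟩ := exists_bump d
  refine ⟨2 * ((N * d + 1) * B), 144 * B * d * 2 ^ d + 1, by positivity, by positivity, ?_⟩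
  intro U hU hUf u v g W hu huv hug hgm hg hVW z r hr hsub hW M l hl hosc hC
  have : IsFiniteMeasure (volume.restrict U) := ⟨by
    rw [Measure.restrict_apply_univ]; exact hUf.lt_top⟩
  obtain ⟨φ, hφs, hφc, hφt, hφ0, hφ1, hφB, hφd⟩ := hbump z r hr
  have hsub1 : cube z r ⊆ U := (cube_mono (by linarith)).trans hsub
  have hM : 0 ≤ M := (norm_nonneg _).trans (hosc z (self_mem_cube hr))
  have hui : IntegrableOn u U := hu.integrable (by rw [ENNReal.one_le_ofReal]; exact hp1.le)
  have havg : ∀ a i, |∫ x in U, g x (a, i) * φ x| ≤ M * B / r := fun a i =>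
    avg_small hU hui huv hug hr hsub1 hM hosc hφs hφc hφt hφd a i
  have hpt : ∀ x ∈ {x | l < ‖g x‖} ∩ cube z r, ENNReal.ofReal (l ^ p * r ^ d / (144 * B)) ≤
      ∫⁻ y in cube z r, ‖Vm p (g x) - Vm p (g y)‖ₑ ^ 2 := by
    intro x hx
    refine tile_pt hp1 hp2 hU hUf hgm hg hr hB hsub1 (by positivity) hφs hφc hφt hφ0 hφ1 hφB
      havg hl ?_ hx.1
    refine le_trans (le_of_eq ?_) hC
    ring
  have hSm : MeasurableSet ({x | l < ‖g x‖} ∩ cube z r) :=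
    (measurableSet_lt measurable_const hgm.norm).inter (measurableSet_cube z r)
  have hpo := poincare_vec hU (f := fun x => Vm p (g x)) ((measurable_Vm p).comp hgm) hr hsub
    ((memLp_Vm hp1 hgm hg).integrable (by norm_num)) hW hVW
  have h1 : ENNReal.ofReal (l ^ p * r ^ d / (144 * B)) *
      volume ({x | l < ‖g x‖} ∩ cube z r) ≤
      ENNReal.ofReal (d * r ^ 2 * (2 * r) ^ d) * ∫⁻ x in cube z (2 * r), ‖W x‖ₑ ^ 2 := by
    rw [← setLIntegral_const]
    calc _ ≤ ∫⁻ x in {x | l < ‖g x‖} ∩ cube z r,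
          ∫⁻ y in cube z r, ‖Vm p (g x) - Vm p (g y)‖ₑ ^ 2 := setLIntegral_mono' hSm hpt
      _ ≤ ∫⁻ x in cube z r, ∫⁻ y in cube z r, ‖Vm p (g x) - Vm p (g y)‖ₑ ^ 2 :=
          lintegral_mono_set inter_subset_right
      _ ≤ _ := hpo
  have hrd : 0 < r ^ d := by positivity
  have hlp : 0 < l ^ p := Real.rpow_pos_of_pos hl p
  calc volume ({x | l < ‖g x‖} ∩ cube z r) * ENNReal.ofReal (l ^ p)
      = ENNReal.ofReal (144 * B / r ^ d) * (ENNReal.ofReal (l ^ p * r ^ d / (144 * B)) *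
          volume ({x | l < ‖g x‖} ∩ cube z r)) := by
        rw [← mul_assoc, ← ENNReal.ofReal_mul (by positivity), mul_comm]
        congr 2
        field_simp
    _ ≤ ENNReal.ofReal (144 * B / r ^ d) * (ENNReal.ofReal (d * r ^ 2 * (2 * r) ^ d) *
          ∫⁻ x in cube z (2 * r), ‖W x‖ₑ ^ 2) := mul_le_mul' le_rfl h1
    _ ≤ _ := by
        rw [← mul_assoc, ← ENNReal.ofReal_mul (by positivity)]
        refine mul_le_mul' (ENNReal.ofReal_le_ofReal ?_) le_rfl
        have : 144 * B / r ^ d * (d * r ^ 2 * (2 * r) ^ d) = 144 * B * d * 2 ^ d * r ^ 2 := by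
          rw [mul_pow]; field_simp
        rw [this]
        have := sq_nonneg r
        nlinarith

lemma core (d N : ℕ) {p α c₁ c₂ : ℝ} (hp1 : 1 < p) (hp2 : p < 2) (hα : α ∈ Set.Ioo (0 : ℝ) 1)
    (hc₁ : 0 < c₁) (hc₂ : 0 < c₂) :
    ∃ Λ D : ℝ, 0 < Λ ∧ 0 < D ∧ ∀ (U : Set (Ed d)), MeasurableSet U → volume U ≠ ∞ →
    ∀ (u v : Ed d → En N) (g : Ed d → Mat N d)
        (W : Ed d → EuclideanSpace ℝ ((Fin N × Fin d) × Fin d)),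
      MemLp u (ENNReal.ofReal p) (volume.restrict U) → u =ᵐ[volume.restrict U] v →
      IsWeakGrad U u g → Measurable g → MemLp g (ENNReal.ofReal p) (volume.restrict U) →
      IsWeakGrad U (fun x => Vm p (g x)) W →
    ∀ (z₀ : Ed d) (ρ K : ℝ), 0 < ρ → 1 ≤ K → cube z₀ (16 * ρ) ⊆ U →
      AEStronglyMeasurable W (volume.restrict (cube z₀ (4 * ρ))) →
      (∀ x ∈ cube z₀ (4 * ρ), ∀ y ∈ cube z₀ (4 * ρ),
        ‖v x - v y‖ ≤ c₂ * (4 * ρ) ^ (1 - α) * K * dist x y ^ α) →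
      ∫⁻ x in cube z₀ (4 * ρ), ‖W x‖ₑ ^ 2 ≤ ENNReal.ofReal (c₁ * ρ ^ d * K ^ p / ρ ^ 2) →
    ∀ l : ℝ, Λ * K ≤ l →
      volume ({x | l < ‖g x‖} ∩ cube z₀ ρ) ≤
        ENNReal.ofReal (D * ρ ^ d * (K / l) ^ (p + 2 / (1 - α))) := by
  obtain ⟨C1, C2, hC1, hC2, htile⟩ := tile d N hp1 hp2
  obtain ⟨hα0, hα1⟩ := hα
  have hα' : 0 < 1 - α := by linarith
  obtain ⟨Λ, hΛ⟩ : ∃ Λ, Λ = C1 * c₂ * 4 ^ (1 - α) * (d + 1 : ℝ) ^ α := ⟨_, rfl⟩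
  have hΛ0 : 0 < Λ := by rw [hΛ]; positivity
  refine ⟨Λ, C2 * c₁ * 2 ^ d * Λ ^ (2 / (1 - α)), hΛ0, by positivity, ?_⟩
  intro U hU hUf u v g W hu huv hug hgm hg hVW z₀ ρ K hρ hK hsub hWm hH hWb l hl
  have hK0 : 0 < K := by linarith
  have hl0 : 0 < l := lt_of_lt_of_le (by positivity) hl
  obtain ⟨t, ht⟩ : ∃ t, t = (Λ * K / l) ^ (1 / (1 - α)) := ⟨_, rfl⟩
  have hb0 : 0 < Λ * K / l := by positivity
  have ht0 : 0 < t := by rw [ht]; positivity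
  have ht1 : t ≤ 1 := by
    rw [ht]
    exact Real.rpow_le_one hb0.le ((div_le_one hl0).2 hl) (by positivity)
  have htp : t ^ (1 - α) = Λ * K / l := by
    rw [ht, ← Real.rpow_mul hb0.le, one_div_mul_cancel hα'.ne', Real.rpow_one]
  have ht2 : t ^ 2 = Λ ^ (2 / (1 - α)) * (K / l) ^ (2 / (1 - α)) := by
    rw [ht, ← Real.rpow_natCast, ← Real.rpow_mul hb0.le, ← Real.mul_rpow hΛ0.le (by positivity)]
    congr 1
    · ring
    · push_cast; ring
  obtain ⟨r, hr⟩ : ∃ r, r = ρ * t := ⟨_, rfl⟩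
  have hr0 : 0 < r := by rw [hr]; positivity
  have hrρ : r ≤ ρ := by rw [hr]; nlinarith
  obtain ⟨M, hM⟩ : ∃ M, M = c₂ * (4 * ρ) ^ (1 - α) * K * ((d + 1) * r) ^ α := ⟨_, rfl⟩
  have hMl : C1 * (M / r) ≤ l := by
    refine le_of_eq ?_
    have e1 : r ^ α = r / r ^ (1 - α) := by
      rw [eq_div_iff (by positivity), ← Real.rpow_add hr0]; simp
    have e2 : r ^ (1 - α) = ρ ^ (1 - α) * (Λ * K / l) := by
      rw [hr, Real.mul_rpow hρ.le ht0.le, htp]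
    have e3 : (0 : ℝ) < ρ ^ (1 - α) := by positivity
    rw [hM, Real.mul_rpow (by norm_num) hρ.le, Real.mul_rpow (by positivity) hr0.le, e1, e2]
    have e4 : C1 * (c₂ * (4 ^ (1 - α) * ρ ^ (1 - α)) * K *
        ((d + 1 : ℝ) ^ α * (r / (ρ ^ (1 - α) * (Λ * K / l)))) / r) =
        (C1 * c₂ * 4 ^ (1 - α) * (d + 1 : ℝ) ^ α) / Λ * l := by
      field_simp
    rw [e4, ← hΛ, div_self hΛ0.ne', one_mul]
  have hsub4 : cube z₀ (4 * ρ) ⊆ U := (cube_mono (by linarith)).trans hsub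
  have hpt : ∀ z ∈ cube z₀ (ρ + r), volume ({x | l < ‖g x‖} ∩ cube z r) * ENNReal.ofReal (l ^ p) ≤
        ENNReal.ofReal (C2 * r ^ 2) * ∫⁻ x in cube z (2 * r), ‖W x‖ₑ ^ 2 := by
    intro z hz
    have hz2 : cube z (2 * r) ⊆ cube z₀ (4 * ρ) := cube_subset_add hz (by linarith)
    refine htile U hU hUf u v g W hu huv hug hgm hg hVW z r hr0 (hz2.trans hsub4)
      (hWm.mono_measure (Measure.restrict_mono hz2 le_rfl)) M l hl0 ?_ hMl
    intro x hx
    have hx4 : x ∈ cube z₀ (4 * ρ) := hz2 (cube_mono (by linarith) hx)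
    have hz4 : z ∈ cube z₀ (4 * ρ) := cube_mono (by linarith) hz
    refine (hH x hx4 z hz4).trans ?_
    rw [hM]
    have : dist x z ≤ (d + 1) * r := by
      rw [dist_eq_norm]
      have hh : x - z ∈ cube (0 : Ed d) (2 * r) := by
        intro i
        have := hx i
        simp only [PiLp.sub_apply, PiLp.zero_apply, sub_zero]
        linarith
      have h := norm_sq_le_of_cube hh
      refine le_of_sq_le_sq (h.trans ?_) (by positivity)
      rw [mul_pow]
      gcongr
      have : (0 : ℝ) ≤ d := by positivity
      nlinarith
    gcongr
  have hSm : MeasurableSet {x | l < ‖g x‖} := measurableSet_lt measurable_const hgm.norm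
  have h1 := avg_lower (R := ρ) z₀ hr0.le ({x | l < ‖g x‖}.indicator 1)
    (measurable_one.indicator hSm)
  have hind : ∀ T : Set (Ed d), ∫⁻ x in T, ({x | l < ‖g x‖}.indicator (1 : Ed d → ℝ≥0∞)) x =
      volume ({x | l < ‖g x‖} ∩ T) := by
    intro T
    rw [lintegral_indicator_one hSm, Measure.restrict_apply hSm]
  simp_rw [hind] at h1
  have h2 := avg_upper (R := ρ + r) (r := 2 * r) (S := 4 * ρ) z₀ (by linarith) (by linarith)
    (fun x => ‖W x‖ₑ ^ 2) (hWm.enorm.pow_const 2)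
  have h3 : volume ({x | l < ‖g x‖} ∩ cube z₀ ρ) * ENNReal.ofReal (r ^ d) *
      ENNReal.ofReal (l ^ p) ≤ ENNReal.ofReal (C2 * r ^ 2) *
      (ENNReal.ofReal (c₁ * ρ ^ d * K ^ p / ρ ^ 2) * ENNReal.ofReal ((2 * r) ^ d)) := by
    calc _ ≤ (∫⁻ z in cube z₀ (ρ + r), volume ({x | l < ‖g x‖} ∩ cube z r)) *
          ENNReal.ofReal (l ^ p) := mul_le_mul' h1 le_rfl
      _ = ∫⁻ z in cube z₀ (ρ + r), volume ({x | l < ‖g x‖} ∩ cube z r) *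
          ENNReal.ofReal (l ^ p) := (lintegral_mul_const' _ _ ENNReal.ofReal_ne_top).symm
      _ ≤ ∫⁻ z in cube z₀ (ρ + r),
          ENNReal.ofReal (C2 * r ^ 2) * ∫⁻ x in cube z (2 * r), ‖W x‖ₑ ^ 2 :=
          setLIntegral_mono' (measurableSet_cube _ _) hpt
      _ = ENNReal.ofReal (C2 * r ^ 2) * ∫⁻ z in cube z₀ (ρ + r),
            ∫⁻ x in cube z (2 * r), ‖W x‖ₑ ^ 2 := lintegral_const_mul' _ _ ENNReal.ofReal_ne_top
      _ ≤ _ := mul_le_mul' le_rfl (h2.trans (mul_le_mul' hWb le_rfl))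
  rw [mul_assoc, ← ENNReal.ofReal_mul (by positivity), ← ENNReal.ofReal_mul (by positivity),
    ← ENNReal.ofReal_mul (by positivity)] at h3
  have hrl : 0 < r ^ d * l ^ p := by positivity
  rw [← ENNReal.le_div_iff_mul_le (Or.inl (by simpa using hrl))
    (Or.inl ENNReal.ofReal_ne_top), ← ENNReal.ofReal_div_of_pos hrl] at h3
  refine h3.trans (le_of_eq ?_)
  congr 1
  have e1 : r ^ 2 = ρ ^ 2 * (Λ ^ (2 / (1 - α)) * (K / l) ^ (2 / (1 - α))) := by
    rw [hr, mul_pow, ht2]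
  rw [e1, Real.rpow_add (by positivity), Real.div_rpow hK0.le hl0.le p, mul_pow]
  field_simp

lemma layer {X : Type} [MeasurableSpace X] {μ : Measure X} {f : X → ℝ} (hf : Measurable f)
    (hf0 : ∀ x, 0 ≤ f x) {q s A L m : ℝ} (hq : 1 < q) (hqs : q < s) (hL : 0 < L) (hA : 0 ≤ A)
    (hm0 : 0 ≤ m) (hm : μ univ ≤ ENNReal.ofReal m)
    (hw : ∀ l, L ≤ l → μ {x | l < f x} ≤ ENNReal.ofReal (A * l ^ (-s))) :
    ∫⁻ x, ENNReal.ofReal (f x ^ q) ∂μ ≤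
      ENNReal.ofReal (q * (m * L ^ q + A * (L ^ (q - s) / (s - q)))) := by
  rw [lintegral_rpow_eq_lintegral_meas_lt_mul μ (Eventually.of_forall hf0) hf.aemeasurable
    (by linarith), ENNReal.ofReal_mul (by linarith)]
  refine mul_le_mul' le_rfl ?_
  have hLp : 0 < L ^ (q - s) / (s - q) := div_pos (by positivity) (by linarith)
  rw [← Ioc_union_Ioi_eq_Ioi hL.le, ENNReal.ofReal_add (by positivity) (by positivity)]
  refine (lintegral_union_le _ _ _).trans (add_le_add ?_ ?_)
  · calc _ ≤ ∫⁻ t in Ioc 0 L, ENNReal.ofReal m * ENNReal.ofReal (L ^ (q - 1)) := by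
          refine setLIntegral_mono' measurableSet_Ioc fun t ht => ?_
          refine mul_le_mul' ((measure_mono (subset_univ _)).trans hm)
            (ENNReal.ofReal_le_ofReal ?_)
          exact Real.rpow_le_rpow ht.1.le ht.2 (by linarith)
      _ = _ := by
          rw [setLIntegral_const, Real.volume_Ioc, ← ENNReal.ofReal_mul hm0,
            ← ENNReal.ofReal_mul (by positivity), sub_zero, Real.rpow_sub_one hL.ne']
          congr 1
          field_simp
  · calc _ ≤ ∫⁻ t in Ioi L, ENNReal.ofReal (A * t ^ (q - 1 - s)) := by
          refine setLIntegral_mono' measurableSet_Ioi fun t ht => ?_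
          have ht0 : 0 < t := hL.trans ht
          refine (mul_le_mul' (hw t (le_of_lt ht)) le_rfl).trans (le_of_eq ?_)
          rw [← ENNReal.ofReal_mul (by positivity), mul_assoc, ← Real.rpow_add ht0]
          congr 3; ring
      _ = ENNReal.ofReal (∫ t in Ioi L, A * t ^ (q - 1 - s)) := by
          rw [ofReal_integral_eq_lintegral_ofReal]
          · exact (integrableOn_Ioi_rpow_of_lt (by linarith) hL).const_mul A
          · filter_upwards [ae_restrict_mem measurableSet_Ioi] with t ht
            have ht0 : 0 < t := hL.trans ht
            simp only [Pi.zero_apply]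
            positivity
      _ = _ := by
          rw [integral_const_mul, integral_Ioi_rpow_of_lt (by linarith) hL]
          congr 2
          rw [show q - 1 - s + 1 = q - s by ring, neg_div, ← div_neg, neg_sub]


lemma local_q (d N : ℕ) {p α c₁ c₂ : ℝ} (hp1 : 1 < p) (hp2 : p < 2) (hα : α ∈ Set.Ioo (0 : ℝ) 1)
    (hc₁ : 0 < c₁) (hc₂ : 0 < c₂) {q : ℝ} (hpq : p < q) (hq : q < p + 2 / (1 - α)) :
    ∃ E : ℝ, 0 < E ∧ ∀ (U : Set (Ed d)), MeasurableSet U → volume U ≠ ∞ →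
    ∀ (u v : Ed d → En N) (g : Ed d → Mat N d)
        (W : Ed d → EuclideanSpace ℝ ((Fin N × Fin d) × Fin d)),
      MemLp u (ENNReal.ofReal p) (volume.restrict U) → u =ᵐ[volume.restrict U] v →
      IsWeakGrad U u g → Measurable g → MemLp g (ENNReal.ofReal p) (volume.restrict U) →
      IsWeakGrad U (fun x => Vm p (g x)) W →
    ∀ (z₀ : Ed d) (ρ K : ℝ), 0 < ρ → 1 ≤ K → cube z₀ (16 * ρ) ⊆ U →
      AEStronglyMeasurable W (volume.restrict (cube z₀ (4 * ρ))) →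
      (∀ x ∈ cube z₀ (4 * ρ), ∀ y ∈ cube z₀ (4 * ρ),
        ‖v x - v y‖ ≤ c₂ * (4 * ρ) ^ (1 - α) * K * dist x y ^ α) →
      ∫⁻ x in cube z₀ (4 * ρ), ‖W x‖ₑ ^ 2 ≤ ENNReal.ofReal (c₁ * ρ ^ d * K ^ p / ρ ^ 2) →
      ∫⁻ x in cube z₀ ρ, ENNReal.ofReal (‖g x‖ ^ q) ≤ ENNReal.ofReal (E * ρ ^ d * K ^ q) := by
  obtain ⟨Λ, D, hΛ, hD, hcore⟩ := core d N hp1 hp2 hα hc₁ hc₂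
  obtain ⟨s, hs⟩ : ∃ s, s = p + 2 / (1 - α) := ⟨_, rfl⟩
  rw [← hs] at hq hcore
  have hsq : 0 < s - q := by linarith
  refine ⟨q * (Λ ^ q + D * (Λ ^ (q - s) / (s - q))), mul_pos (by linarith) (by positivity), ?_⟩
  intro U hU hUf u v g W hu huv hug hgm hg hVW z₀ ρ K hρ hK hsub hWm hH hWb
  have hc := hcore U hU hUf u v g W hu huv hug hgm hg hVW z₀ ρ K hρ hK hsub hWm hH hWb
  have hK0 : 0 < K := by linarith
  have := layer (μ := volume.restrict (cube z₀ ρ)) (f := fun x => ‖g x‖) hgm.norm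
    (fun x => norm_nonneg _) (q := q) (s := s) (A := D * ρ ^ d * K ^ s) (L := Λ * K) (m := ρ ^ d)
    (by linarith) hq (by positivity) (by positivity) (by positivity)
    (by rw [Measure.restrict_apply_univ, volume_cube _ hρ.le]) (by
      intro l hl
      have hl0 : 0 < l := lt_of_lt_of_le (by positivity) hl
      rw [Measure.restrict_apply (measurableSet_lt measurable_const hgm.norm)]
      refine (hc l hl).trans (le_of_eq ?_)
      congr 1
      rw [Real.div_rpow hK0.le hl0.le, Real.rpow_neg hl0.le]
      ring)
  refine this.trans (le_of_eq ?_)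
  congr 1
  rw [Real.mul_rpow hΛ.le hK0.le, Real.mul_rpow hΛ.le hK0.le, Real.rpow_sub hK0 q s]
  have : 0 < K ^ s := by positivity
  field_simp

lemma average_cube {d : ℕ} (c : Ed d) {R : ℝ} (hR : 0 < R) (f : Ed d → ℝ) :
    ⨍ x in cube c R, f x = (∫ x in cube c R, f x) / R ^ d := by
  rw [setAverage_eq, measureReal_def, volume_cube _ hR.le, ENNReal.toReal_ofReal (by positivity),
    smul_eq_mul]
  ring

lemma mainM (d N : ℕ) (p α c₁ c₂ : ℝ) (hp1 : 1 < p) (hp2 : p < 2) (hα : α ∈ Set.Ioo (0 : ℝ) 1)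
    (hc₁ : 0 < c₁) (hc₂ : 0 < c₂) (q : ℝ) (hpq : p < q) (hq : q < p + 2 / (1 - α)) :
    ∃ C : ℝ, 0 < C ∧
      ∀ (U : Set (Ed d)), MeasurableSet U → volume U ≠ ∞ →
      ∀ (u v : Ed d → En N) (g : Ed d → Mat N d)
        (W : Ed d → EuclideanSpace ℝ ((Fin N × Fin d) × Fin d)), Measurable g →
        MemLp u (ENNReal.ofReal p) (volume.restrict U) →
        IsWeakGrad U u g →
        MemLp g (ENNReal.ofReal p) (volume.restrict U) →
        IsWeakGrad U (fun x => Vm p (g x)) W →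
        (∀ (cq : Ed d) (R : ℝ), 0 < R → cube cq (4 * R) ⊆ U →
          MemLp W 2 (volume.restrict (cube cq R)) ∧
          ∫⁻ x in cube cq R, (‖W x‖₊ : ℝ≥0∞) ^ 2 ≤
            ENNReal.ofReal (c₁ / R ^ 2) *
              ∫⁻ x in cube cq (4 * R), (‖Vm p (g x)‖₊ : ℝ≥0∞) ^ 2) →
        u =ᵐ[volume.restrict U] v →
        (∀ (cq : Ed d) (R : ℝ), 0 < R → cube cq (3 * R) ⊆ U →
          ∀ x ∈ cube cq R, ∀ y ∈ cube cq R,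
            ‖v x - v y‖ ≤
              c₂ * R ^ (1 - α) * ((⨍ z in cube cq (2 * R), ‖g z‖ ^ p) ^ (1 / p) + 1) *
                dist x y ^ α) →
      ∀ (cq : Ed d) (R : ℝ), 0 < R → cube cq (2 * R) ⊆ U →
        MemLp g (ENNReal.ofReal q) (volume.restrict (cube cq R)) ∧
        (⨍ x in cube cq R, ‖g x‖ ^ q) ^ (1 / q) ≤
          C * ((⨍ x in cube cq (2 * R), ‖g x‖ ^ p) ^ (1 / p) + 1) := by
  obtain ⟨E, hE, hloc⟩ := local_q d N hp1 hp2 hα (c₁ := c₁ * 40 ^ d) (by positivity) hc₂ hpq hq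
  have hq0 : 0 < q := by linarith
  have hp0 : 0 < p := by linarith
  refine ⟨(E * 2 ^ d) ^ (1 / q) * 5 ^ d, by positivity, ?_⟩
  intro U hU hUf u v g W hgm hu hug hg hVW hCac huv hHol cq R hR hsub
  have hgp : IntegrableOn (fun x => ‖g x‖ ^ p) U := by
    have := hg.integrable_norm_rpow (by simp; linarith) (by simp)
    rwa [ENNReal.toReal_ofReal hp0.le] at this
  have hgpR := hgp.mono_set hsub
  have hmono : ∀ T ⊆ cube cq (2 * R), ∫ x in T, ‖g x‖ ^ p ≤ ∫ x in cube cq (2 * R), ‖g x‖ ^ p :=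
    fun T hT => setIntegral_mono_set hgpR (Eventually.of_forall fun x => by positivity)
      hT.eventuallyLE
  obtain ⟨I, hI⟩ : ∃ I, I = ∫ x in cube cq (2 * R), ‖g x‖ ^ p := ⟨_, rfl⟩
  rw [← hI] at hmono
  have hI0 : 0 ≤ I := by rw [hI]; exact integral_nonneg fun x => by positivity
  obtain ⟨A, hA⟩ : ∃ A, A = ⨍ x in cube cq (2 * R), ‖g x‖ ^ p := ⟨_, rfl⟩
  have hAI : A = I / (2 * R) ^ d := by rw [hA, average_cube _ (by positivity), hI]
  have hA0 : 0 ≤ A := by rw [hAI]; positivity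
  rw [← hA]
  obtain ⟨K, hK⟩ : ∃ K, K = 5 ^ d * (A ^ (1 / p) + 1) := ⟨_, rfl⟩
  have h5 : (1 : ℝ) ≤ 5 ^ d := one_le_pow₀ (by norm_num)
  have hAp : 0 ≤ A ^ (1 / p) := by positivity
  have hKA : A ^ (1 / p) + 1 ≤ K := by rw [hK]; nlinarith
  have hK1 : 1 ≤ K := by linarith
  have hK0 : 0 < K := by linarith
  have hAK : A ≤ K ^ p := by
    calc A = (A ^ (1 / p)) ^ p := by
          rw [← Real.rpow_mul hA0, one_div_mul_cancel hp0.ne', Real.rpow_one]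
      _ ≤ K ^ p := Real.rpow_le_rpow hAp (by linarith) hp0.le
  obtain ⟨ρ, hρ⟩ : ∃ ρ, ρ = R / 20 := ⟨_, rfl⟩
  have hρ0 : 0 < ρ := by rw [hρ]; positivity
  have hR20 : R = 20 * ρ := by rw [hρ]; ring
  have hP : ∀ z ∈ cube cq (R + ρ),
      ∫⁻ x in cube z ρ, ENNReal.ofReal (‖g x‖ ^ q) ≤ ENNReal.ofReal (E * ρ ^ d * K ^ q) := by
    intro z hz
    have h16 : cube z (16 * ρ) ⊆ cube cq (2 * R) := cube_subset_add hz (by linarith)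
    have h16U := h16.trans hsub
    obtain ⟨hW2, hWc⟩ := hCac z (4 * ρ) (by positivity)
      (by rw [show 4 * (4 * ρ) = 16 * ρ by ring]; exact h16U)
    refine hloc U hU hUf u v g W hu huv hug hgm hg hVW z ρ K hρ0 hK1 h16U
      hW2.aestronglyMeasurable ?_ ?_
    · intro x hx y hy
      refine (hHol z (4 * ρ) (by positivity) ((cube_mono (by linarith)).trans h16U)
        x hx y hy).trans ?_
      have h8 : (⨍ z in cube z (2 * (4 * ρ)), ‖g z‖ ^ p) ^ (1 / p) + 1 ≤ K := by
        have e1 : ⨍ z in cube z (2 * (4 * ρ)), ‖g z‖ ^ p ≤ 5 ^ d * A := by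
          rw [average_cube _ (by positivity), hAI]
          have e2 := hmono (cube z (2 * (4 * ρ))) ((cube_mono (by linarith)).trans h16)
          have e3 : (2 * R) ^ d = 5 ^ d * (2 * (4 * ρ)) ^ d := by
            rw [← mul_pow, hR20]; congr 1; ring
          rw [e3]
          have e4 : 5 ^ d * (I / (5 ^ d * (2 * (4 * ρ)) ^ d)) = I / (2 * (4 * ρ)) ^ d := by
            field_simp
          rw [e4]
          gcongr
        have e0 : 0 ≤ ⨍ z in cube z (2 * (4 * ρ)), ‖g z‖ ^ p := by
          rw [average_cube _ (by positivity)]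
          exact div_nonneg (integral_nonneg fun x => by positivity) (by positivity)
        have e5 : (5 ^ d * A) ^ (1 / p) ≤ 5 ^ d * A ^ (1 / p) := by
          rw [Real.mul_rpow (by positivity) hA0]
          gcongr
          refine (Real.rpow_le_rpow_of_exponent_le h5 ((div_le_one hp0).2 hp1.le)).trans ?_
          rw [Real.rpow_one]
        have e6 := Real.rpow_le_rpow e0 e1 (by positivity : 0 ≤ 1 / p)
        rw [hK]
        linarith
      gcongr
    · refine le_trans hWc ?_
      have e1 : ∫⁻ x in cube z (4 * (4 * ρ)), (‖Vm p (g x)‖₊ : ℝ≥0∞) ^ 2 ≤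
          ENNReal.ofReal (K ^ p * (2 * R) ^ d) := by
        calc _ = ∫⁻ x in cube z (16 * ρ), ENNReal.ofReal (‖g x‖ ^ p) := by
              rw [show 4 * (4 * ρ) = 16 * ρ by ring]
              refine lintegral_congr fun x => ?_
              rw [← enorm_eq_nnnorm, ← ofReal_norm, ← ENNReal.ofReal_pow (norm_nonneg _),
                norm_Vm_sq hp1]
          _ ≤ ∫⁻ x in cube cq (2 * R), ENNReal.ofReal (‖g x‖ ^ p) := lintegral_mono_set h16
          _ = ENNReal.ofReal I := by
              rw [hI, ofReal_integral_eq_lintegral_ofReal hgpR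
                (Eventually.of_forall fun x => by positivity)]
          _ ≤ _ := by
              refine ENNReal.ofReal_le_ofReal ?_
              have : I = A * (2 * R) ^ d := by rw [hAI]; field_simp
              rw [this]
              gcongr
      refine (mul_le_mul' le_rfl e1).trans ?_
      rw [← ENNReal.ofReal_mul (by positivity)]
      refine ENNReal.ofReal_le_ofReal ?_
      have e2 : (2 * R) ^ d = 40 ^ d * ρ ^ d := by rw [← mul_pow, hR20]; congr 1; ring
      have e3 : c₁ / (4 * ρ) ^ 2 * (K ^ p * (2 * R) ^ d) =
          (c₁ * 40 ^ d * ρ ^ d * K ^ p / ρ ^ 2) / 16 := by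
        rw [e2]; field_simp; norm_num
      rw [e3]
      exact div_le_self (by positivity) (by norm_num)
  have hfm : Measurable fun x => ENNReal.ofReal (‖g x‖ ^ q) :=
    (hgm.norm.pow_const q).ennreal_ofReal
  have h1 := avg_lower (R := R) (r := ρ) cq hρ0.le _ hfm
  have h2 : (∫⁻ x in cube cq R, ENNReal.ofReal (‖g x‖ ^ q)) * ENNReal.ofReal (ρ ^ d) ≤
      ENNReal.ofReal (E * ρ ^ d * K ^ q) * ENNReal.ofReal ((R + ρ) ^ d) := by
    refine h1.trans ((setLIntegral_mono' (measurableSet_cube _ _) hP).trans (le_of_eq ?_))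
    rw [setLIntegral_const, volume_cube _ (by positivity)]
  have hρd : 0 < ρ ^ d := by positivity
  have h3 : ∫⁻ x in cube cq R, ENNReal.ofReal (‖g x‖ ^ q) ≤
      ENNReal.ofReal (E * 2 ^ d * R ^ d * K ^ q) := by
    rw [← ENNReal.ofReal_mul (by positivity),
      ← ENNReal.le_div_iff_mul_le (Or.inl (by simpa using hρd))
      (Or.inl ENNReal.ofReal_ne_top), ← ENNReal.ofReal_div_of_pos hρd] at h2
    refine h2.trans (ENNReal.ofReal_le_ofReal ?_)
    have e1 : E * ρ ^ d * K ^ q * (R + ρ) ^ d / ρ ^ d = E * (R + ρ) ^ d * K ^ q := by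
      field_simp
    rw [e1, mul_assoc E (2 ^ d), ← mul_pow]
    gcongr
    linarith
  have hInt : IntegrableOn (fun x => ‖g x‖ ^ q) (cube cq R) := by
    refine ⟨(hgm.norm.pow_const q).aestronglyMeasurable, ?_⟩
    rw [hasFiniteIntegral_iff_ofReal (Eventually.of_forall fun x => by positivity)]
    exact lt_of_le_of_lt h3 ENNReal.ofReal_lt_top
  refine ⟨?_, ?_⟩
  · rw [← integrable_norm_rpow_iff hgm.aestronglyMeasurable (by simpa using hq0) (by simp),
      ENNReal.toReal_ofReal hq0.le]
    exact hInt
  · have h4 : ∫ x in cube cq R, ‖g x‖ ^ q ≤ E * 2 ^ d * R ^ d * K ^ q := by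
      rw [← ofReal_integral_eq_lintegral_ofReal hInt
        (Eventually.of_forall fun x => by positivity)] at h3
      exact (ENNReal.ofReal_le_ofReal_iff (by positivity)).1 h3
    have h5 : ⨍ x in cube cq R, ‖g x‖ ^ q ≤ E * 2 ^ d * K ^ q := by
      rw [average_cube _ hR, div_le_iff₀ (by positivity)]
      linarith
    have h6 : 0 ≤ ⨍ x in cube cq R, ‖g x‖ ^ q := by
      rw [average_cube _ hR]
      exact div_nonneg (integral_nonneg fun x => by positivity) (by positivity)
    refine (Real.rpow_le_rpow h6 h5 (by positivity)).trans (le_of_eq ?_)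
    rw [Real.mul_rpow (by positivity) (by positivity), ← Real.rpow_mul hK0.le,
      mul_one_div_cancel hq0.ne', Real.rpow_one, hK, mul_assoc]

/-- Higher integrability up to `L^q`, `q ∈ (p, p + 2/(1−α))`, for
`1 < p < 2`: `∇u ∈ L^q_loc(Q₀)` with `(⨍_Q |∇u|^q)^{1/q} ≤ C((⨍_{2Q}|∇u|^p)^{1/p} + 1)`
whenever `2Q ⊆ Q₀`, with `C = C(d,N,p,q,α,c₁,c₂)`. -/
theorem stmt9 (d N : ℕ) (p α c₁ c₂ : ℝ) (hp1 : 1 < p) (hp2 : p < 2) (hα : α ∈ Set.Ioo (0 : ℝ) 1)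
    (hc₁ : 0 < c₁) (hc₂ : 0 < c₂) :
    ∀ q : ℝ, p < q → q < p + 2 / (1 - α) →
    ∃ C : ℝ, 0 < C ∧
      ∀ (c₀ : Ed d) (R₀ : ℝ), 0 < R₀ →
      ∀ (u v : Ed d → En N) (g : Ed d → Mat N d)
        (W : Ed d → EuclideanSpace ℝ ((Fin N × Fin d) × Fin d)),
        -- `u ∈ W^{1,p}(Q₀;ℝ^N)` with weak gradient `g`
        MemLp u (ENNReal.ofReal p) (volume.restrict (cube c₀ R₀)) →
        IsWeakGrad (cube c₀ R₀) u g →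
        MemLp g (ENNReal.ofReal p) (volume.restrict (cube c₀ R₀)) →
        -- (i) `V(∇u) ∈ W^{1,2}_loc(Q₀)` with the Caccioppoli estimate
        IsWeakGrad (cube c₀ R₀) (fun x => Vm p (g x)) W →
        (∀ (cq : Ed d) (R : ℝ), 0 < R → cube cq (4 * R) ⊆ cube c₀ R₀ →
          MemLp W 2 (volume.restrict (cube cq R)) ∧
          ∫⁻ x in cube cq R, (‖W x‖₊ : ℝ≥0∞) ^ 2 ≤
            ENNReal.ofReal (c₁ / R ^ 2) *
              ∫⁻ x in cube cq (4 * R), (‖Vm p (g x)‖₊ : ℝ≥0∞) ^ 2) →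
        -- (ii) `v` is a continuous representative satisfying the Hölder estimate
        ContinuousOn v (cube c₀ R₀) →
        u =ᵐ[volume.restrict (cube c₀ R₀)] v →
        (∀ (cq : Ed d) (R : ℝ), 0 < R → cube cq (3 * R) ⊆ cube c₀ R₀ →
          ∀ x ∈ cube cq R, ∀ y ∈ cube cq R,
            ‖v x - v y‖ ≤
              c₂ * R ^ (1 - α) * ((⨍ z in cube cq (2 * R), ‖g z‖ ^ p) ^ (1 / p) + 1) *
                dist x y ^ α) →
      ∀ (cq : Ed d) (R : ℝ), 0 < R → cube cq (2 * R) ⊆ cube c₀ R₀ →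
        MemLp g (ENNReal.ofReal q) (volume.restrict (cube cq R)) ∧
        (⨍ x in cube cq R, ‖g x‖ ^ q) ^ (1 / q) ≤
          C * ((⨍ x in cube cq (2 * R), ‖g x‖ ^ p) ^ (1 / p) + 1) := by
  intro q hpq hq
  obtain ⟨C, hC, hmain⟩ := mainM d N p α c₁ c₂ hp1 hp2 hα hc₁ hc₂ q hpq hq
  refine ⟨C, hC, ?_⟩
  intro c₀ R₀ hR₀ u v g W hu hug hg hVW hCac _ huv hHol cq R hR hsub
  obtain ⟨g', hg'm, hgg⟩ : ∃ g' : Ed d → Mat N d, Measurable g' ∧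
      g =ᵐ[volume.restrict (cube c₀ R₀)] g' :=
    ⟨_, hg.aestronglyMeasurable.stronglyMeasurable_mk.measurable,
      hg.aestronglyMeasurable.ae_eq_mk⟩
  have hT : ∀ T ⊆ cube c₀ R₀, g =ᵐ[volume.restrict T] g' := fun T hT =>
    ae_restrict_of_ae_restrict_of_subset hT hgg
  have hav : ∀ (T : Set (Ed d)) (s : ℝ), T ⊆ cube c₀ R₀ →
      ⨍ x in T, ‖g x‖ ^ s = ⨍ x in T, ‖g' x‖ ^ s := by
    intro T s hTs
    rw [setAverage_eq, setAverage_eq]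
    congr 1
    refine integral_congr_ae ?_
    filter_upwards [hT T hTs] with x hx
    rw [hx]
  have hUf : volume (cube c₀ R₀) ≠ ∞ := by
    rw [volume_cube _ hR₀.le]; exact ENNReal.ofReal_ne_top
  have hres := hmain (cube c₀ R₀) (measurableSet_cube _ _) hUf u v g' W hg'm hu
    (by
      intro φ h1 h2 h3 a i
      rw [hug φ h1 h2 h3 a i]
      congr 1
      refine integral_congr_ae ?_
      filter_upwards [hgg] with x hx
      rw [hx])
    (hg.ae_eq hgg)
    (by
      intro φ h1 h2 h3 a i
      rw [← hVW φ h1 h2 h3 a i]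
      refine integral_congr_ae ?_
      filter_upwards [hgg] with x hx
      rw [hx])
    (by
      intro c r hr hs
      refine ⟨(hCac c r hr hs).1, (hCac c r hr hs).2.trans (le_of_eq ?_)⟩
      congr 1
      refine lintegral_congr_ae ?_
      filter_upwards [hT _ hs] with x hx
      rw [hx])
    huv
    (by
      intro c r hr hs x hx y hy
      have := hHol c r hr hs x hx y hy
      rwa [hav _ p ((cube_mono (by linarith)).trans hs)] at this)
    cq R hR hsub
  have hsub1 : cube cq R ⊆ cube c₀ R₀ := (cube_mono (by linarith)).trans hsub
  rw [hav _ q hsub1, hav _ p hsub]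
  exact ⟨hres.1.ae_eq (hT _ hsub1).symm, hres.2⟩
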